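/- (Aronson–Caffarelli type estimate, Theorem 1.1, first part.) Let d ≥ 1 and 0 < m < 1. There exist positive constants C₁ and C₂ depending only on d and m with the following property. Let Ω ⊆ ℝ^d be open, let u be a classical solution of the FDE ∂ₜu = Δ(u^m) on (0,T)×Ω that takes nonnegative initial data u₀ ∈ L¹_loc(Ω) and has finite extinction time T. If x₀ ∈ Ω and R > 0 are such that the closed ball of radius 3R about x₀ is contained in Ω, then for every 0 < t < T: R^{−d} ∫_{B_R(x₀)} u₀(x) dx ≤ C₁ R^{−2/(1−m)} t^{1/(1−m)} + C₂ T^{1/(1−m)} R^{−2} t^{−m/(1−m)} u(t,x₀)^m. -/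

import Mathlib

open MeasureTheory Metric Set Real

/-- The spatial Laplacian of `f : ℝ^d → ℝ` at a point, as the sum of second
coordinate derivatives. -/
noncomputable def spaceLap {d : ℕ} (f : EuclideanSpace ℝ (Fin d) → ℝ)
    (x : EuclideanSpace ℝ (Fin d)) : ℝ :=
  ∑ i : Fin d, fderiv ℝ (fun y => fderiv ℝ f y (EuclideanSpace.single i 1)) x
    (EuclideanSpace.single i 1)

/-- `u` is a classical solution of the fast diffusion equation `∂ₜ u = Δ(u^m)`
on the space-time set `Q`: it is positive and smooth on `Q` and satisfies the
equation pointwise on `Q`. -/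
def IsFDESol {d : ℕ} (m : ℝ) (Q : Set (ℝ × EuclideanSpace ℝ (Fin d)))
    (u : ℝ → EuclideanSpace ℝ (Fin d) → ℝ) : Prop :=
  (∀ p ∈ Q, 0 < u p.1 p.2) ∧
  ContDiffOn ℝ (⊤ : ℕ∞) (fun p : ℝ × EuclideanSpace ℝ (Fin d) => u p.1 p.2) Q ∧
  ∀ p ∈ Q, deriv (fun s => u s p.2) p.1 = spaceLap (fun y => u p.1 y ^ m) p.2

/-- `u` (defined for `0 < t < T` on `Ω`) takes the initial data `u₀`:
it extends continuously to `{0} × Ω` with value `u₀` there. -/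
def TakesInit {d : ℕ} (T : ℝ) (Ω : Set (EuclideanSpace ℝ (Fin d)))
    (u : ℝ → EuclideanSpace ℝ (Fin d) → ℝ) (u₀ : EuclideanSpace ℝ (Fin d) → ℝ) : Prop :=
  ContinuousOn (fun p : ℝ × EuclideanSpace ℝ (Fin d) => u p.1 p.2) (Ico 0 T ×ˢ Ω) ∧
  ∀ x ∈ Ω, u 0 x = u₀ x

/-- `u` has finite extinction time `T` on `Ω`: it extends continuously to
`{T} × Ω` with value `0` there, while `u(t,·)` is not identically zero for `0 < t < T`. -/
def ExtinctAt {d : ℕ} (T : ℝ) (Ω : Set (EuclideanSpace ℝ (Fin d)))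
    (u : ℝ → EuclideanSpace ℝ (Fin d) → ℝ) : Prop :=
  ContinuousOn (fun p : ℝ × EuclideanSpace ℝ (Fin d) => u p.1 p.2) (Ioc 0 T ×ˢ Ω) ∧
  (∀ x ∈ Ω, u T x = 0) ∧
  ∀ t ∈ Ioo 0 T, ∃ x ∈ Ω, u t x ≠ 0

/-!
Write `n = 1 / (1 - m)`. If `θ ^ (-n) * u θ x` were nonincreasing in `θ` (Bénilan–Crandall), the
estimate would follow by testing the equation with two functions. A local solution need not have
this monotonicity, so `u` is replaced by its envelope
`W θ x = θ ^ n * inf {σ ^ (-n) * u σ x | b ≤ σ ≤ θ}`. It agrees with `u` at the initial time `b`,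
lies below `u` afterwards, is monotone in the required sense, and, as an infimum of rescaled
solutions `λ ^ n * u (θ / λ) x`, is again a supersolution. Since `W` is merely continuous, being a
supersolution is expressed by backward time differences and discrete Laplacians.

Testing with a cutoff `φ₀` satisfying `Δφ₀ ≥ -k φ₀ ^ m` (Herrero–Pierre) bounds the initial mass of
`W` by its mass at time `t` plus a multiple of `t ^ n`. Testing between `t` and `T`, where the mass
vanishes, with a regularised Green function `φ` truncated to `B_{3R}(x₀)`, the monotonicity bounds
the mass at time `t` by the flux `∫ (-Δφ)⁺ u(t) ^ m`, which concentrates at `x₀` as the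
regularisation is removed.
-/

open Filter Topology

section Calculus

theorem second_difference_le {g g' g'' : ℝ → ℝ} {q h : ℝ} (hh : 0 ≤ h)
    (hg : ∀ s ∈ Icc (-h) h, HasDerivAt g (g' s) s)
    (hg' : ∀ s ∈ Icc (-h) h, HasDerivAt g' (g'' s) s)
    (hq : ∀ s ∈ Icc (-h) h, g'' s ≤ q) :
    g h - 2 * g 0 + g (-h) ≤ q * h ^ 2 := by
  have hconv : ConvexOn ℝ (Icc (-h) h) fun s => q * s ^ 2 / 2 - g s := by
    refine convexOn_of_hasDerivWithinAt2_nonneg (f' := fun s => q * s - g' s)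
      (f'' := fun s => q - g'' s) (convex_Icc _ _)
      (fun s hs => ContinuousAt.continuousWithinAt ?_) (fun s hs => ?_) (fun s hs => ?_)
      (fun s hs => sub_nonneg.2 (hq s (interior_subset hs)))
    · exact ContinuousAt.sub (by fun_prop) (hg s hs).continuousAt
    · have hsq : HasDerivAt (fun s : ℝ => q * s ^ 2 / 2) (q * s) s :=
        (((hasDerivAt_pow 2 s).const_mul q).div_const 2).congr_deriv (by norm_num; ring)
      exact (hsq.sub (hg s (interior_subset hs))).hasDerivWithinAt
    · have hlin : HasDerivAt (fun s : ℝ => q * s) q s := by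
        simpa using (hasDerivAt_id s).const_mul q
      exact (hlin.sub (hg' s (interior_subset hs))).hasDerivWithinAt
  have hmid := hconv.2 (left_mem_Icc.2 (by linarith)) (right_mem_Icc.2 (by linarith))
    (by norm_num : (0 : ℝ) ≤ 1 / 2) (by norm_num : (0 : ℝ) ≤ 1 / 2) (by norm_num)
  rw [show (1 / 2 : ℝ) • (-h) + (1 / 2 : ℝ) • h = 0 by simp] at hmid
  simp only [smul_eq_mul] at hmid
  linarith

variable {E : Type*} [NormedAddCommGroup E] [NormedSpace ℝ E]

theorem hasDerivAt_comp_add_smul {f : E → ℝ} {x v : E} {s : ℝ}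
    (hf : DifferentiableAt ℝ f (x + s • v)) :
    HasDerivAt (fun r : ℝ => f (x + r • v)) (fderiv ℝ f (x + s • v) v) s := by
  have hline : HasDerivAt (fun r : ℝ => x + r • v) v s := by
    simpa using ((hasDerivAt_id s).smul_const v).const_add x
  exact hf.hasFDerivAt.comp_hasDerivAt s hline

theorem contDiffOn_fderiv_apply {f : E → ℝ} {Q : Set E} (hQ : IsOpen Q)
    (hf : ContDiffOn ℝ 2 f Q) (v : E) : ContDiffOn ℝ 1 (fun y => fderiv ℝ f y v) Q :=
  (hf.fderiv_of_isOpen hQ (by norm_num)).clm_apply contDiffOn_const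

theorem continuousOn_second_fderiv_apply {f : E → ℝ} {Q : Set E} (hQ : IsOpen Q)
    (hf : ContDiffOn ℝ 2 f Q) (v : E) :
    ContinuousOn (fun y => fderiv ℝ (fun z => fderiv ℝ f z v) y v) Q :=
  ((contDiffOn_fderiv_apply hQ hf v).continuousOn_fderiv_of_isOpen hQ le_rfl).clm_apply
    continuousOn_const

theorem second_difference_le_of_contDiffOn {f : E → ℝ} {Q : Set E} (hQ : IsOpen Q)
    (hf : ContDiffOn ℝ 2 f Q) {x v : E} {h q : ℝ} (hh : 0 ≤ h)
    (hmem : ∀ s ∈ Icc (-h) h, x + s • v ∈ Q)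
    (hq : ∀ s ∈ Icc (-h) h, fderiv ℝ (fun z => fderiv ℝ f z v) (x + s • v) v ≤ q) :
    f (x + h • v) - 2 * f x + f (x - h • v) ≤ q * h ^ 2 := by
  have hdiff := second_difference_le (g := fun s => f (x + s • v)) hh
    (fun s hs => hasDerivAt_comp_add_smul
      ((hf.contDiffAt (hQ.mem_nhds (hmem s hs))).differentiableAt two_ne_zero))
    (fun s hs => hasDerivAt_comp_add_smul (((contDiffOn_fderiv_apply hQ hf v).contDiffAt
      (hQ.mem_nhds (hmem s hs))).differentiableAt one_ne_zero)) hq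
  simpa [sub_eq_add_neg] using hdiff

theorem fderiv_slice_apply {F : Type*} [NormedAddCommGroup F] [NormedSpace ℝ F]
    {f : F × E → ℝ} {p : F × E} (hf : DifferentiableAt ℝ f p) (v : E) :
    fderiv ℝ (fun y => f (p.1, y)) p.2 v = fderiv ℝ f p (0, v) := by
  have hcomp : HasFDerivAt (fun y => f (p.1, y)) _ p.2 :=
    hf.hasFDerivAt.comp p.2 (hasFDerivAt_prodMk_right (𝕜 := ℝ) p.1 p.2)
  simp [hcomp.fderiv]

theorem eventually_mem_and_abs_sub_lt {X : Type*} [PseudoMetricSpace X] {g : X → ℝ} {C Q : Set X}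
    (hC : IsCompact C) (hQ : IsOpen Q) (hCQ : C ⊆ Q) (hg : ContinuousOn g Q) {ε : ℝ}
    (hε : 0 < ε) :
    ∀ᶠ h in 𝓝[>] (0 : ℝ), ∀ p ∈ C, ∀ q, dist p q ≤ h → q ∈ Q ∧ |g p - g q| < ε := by
  obtain ⟨δ, hδ, hδQ⟩ := hC.exists_thickening_subset_open hQ hCQ
  obtain ⟨η, hη, hηg⟩ := Metric.mem_uniformity_dist.1 (hC.uniformContinuousAt_of_continuousAt g
    (fun p hp => hg.continuousAt (hQ.mem_nhds (hCQ hp))) (Metric.dist_mem_uniformity hε))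
  filter_upwards [Ioo_mem_nhdsGT (lt_min hδ hη)] with h hh p hp q hpq
  have hlt := lt_min_iff.1 (hpq.trans_lt hh.2)
  exact ⟨hδQ (mem_thickening_iff.2 ⟨p, hp, by rw [dist_comm]; exact hlt.1⟩), hηg hlt.2 hp⟩

end Calculus

section DiscreteLaplacian

variable {d : ℕ}

/-- The discrete Laplacian of step `h` at `x`: the sum of the second differences of `f` along the
coordinate axes. It replaces `spaceLap` for infima of solutions, which are merely continuous. -/
noncomputable def discreteLap (h : ℝ) (f : EuclideanSpace ℝ (Fin d) → ℝ)
    (x : EuclideanSpace ℝ (Fin d)) : ℝ :=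
  (∑ i, (f (x + h • EuclideanSpace.single i 1) - 2 * f x +
    f (x - h • EuclideanSpace.single i 1))) / h ^ 2

variable {f g : EuclideanSpace ℝ (Fin d) → ℝ} {x : EuclideanSpace ℝ (Fin d)}

theorem discreteLap_const_mul (h c : ℝ) (f : EuclideanSpace ℝ (Fin d) → ℝ)
    (x : EuclideanSpace ℝ (Fin d)) :
    discreteLap h (fun y => c * f y) x = c * discreteLap h f x := by
  simp only [discreteLap, mul_div_assoc', Finset.mul_sum]
  congr 2 with i
  ring

theorem discreteLap_neg (h : ℝ) (f : EuclideanSpace ℝ (Fin d) → ℝ)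
    (x : EuclideanSpace ℝ (Fin d)) : discreteLap h (fun y => -f y) x = -discreteLap h f x := by
  simpa using discreteLap_const_mul h (-1) f x

theorem dist_add_smul_single (x : EuclideanSpace ℝ (Fin d)) (s : ℝ) (i : Fin d) :
    dist x (x + s • EuclideanSpace.single i 1) = |s| := by
  simp [norm_smul]

theorem discreteLap_le_of_touching {h : ℝ} (hle : ∀ y, dist x y ≤ |h| → f y ≤ g y)
    (heq : f x = g x) : discreteLap h f x ≤ discreteLap h g x := by
  unfold discreteLap
  gcongr with i
  · exact hle _ (dist_add_smul_single x h i).le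
  · exact heq.ge
  · rw [sub_eq_add_neg, ← neg_smul]
    exact hle _ ((dist_add_smul_single x (-h) i).trans (abs_neg h)).le

theorem continuous_discreteLap (hf : Continuous f) (h : ℝ) : Continuous (discreteLap h f) := by
  unfold discreteLap
  fun_prop

theorem discreteLap_eq_zero {h : ℝ} (hf : ∀ y, dist x y ≤ |h| → f y = 0) :
    discreteLap h f x = 0 := by
  refine div_eq_zero_iff.2 (.inl (Finset.sum_eq_zero fun i _ => ?_))
  rw [hf _ (dist_add_smul_single x h i).le, hf x (by simp), sub_eq_add_neg x, ← neg_smul,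
    hf _ ((dist_add_smul_single x (-h) i).trans (abs_neg h)).le]
  ring

variable {F : Type*} [NormedAddCommGroup F] [NormedSpace ℝ F]

theorem spaceLap_slice {f : F × EuclideanSpace ℝ (Fin d) → ℝ}
    {Q : Set (F × EuclideanSpace ℝ (Fin d))} (hQ : IsOpen Q) (hf : ContDiffOn ℝ 2 f Q)
    {p : F × EuclideanSpace ℝ (Fin d)} (hp : p ∈ Q) :
    spaceLap (fun y => f (p.1, y)) p.2 = ∑ i, fderiv ℝ
      (fun q => fderiv ℝ f q (0, EuclideanSpace.single i 1)) p (0, EuclideanSpace.single i 1) := by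
  refine Finset.sum_congr rfl fun i _ => ?_
  have hslice : (fun y => fderiv ℝ (fun z => f (p.1, z)) y (EuclideanSpace.single i 1))
      =ᶠ[𝓝 p.2] fun y => fderiv ℝ f (p.1, y) (0, EuclideanSpace.single i 1) := by
    filter_upwards [(Continuous.prodMk_right p.1).continuousAt.preimage_mem_nhds
      (hQ.mem_nhds hp)] with y hy
    exact fderiv_slice_apply ((hf.contDiffAt (hQ.mem_nhds hy)).differentiableAt two_ne_zero) _
  rw [hslice.fderiv_eq]
  exact fderiv_slice_apply (((contDiffOn_fderiv_apply hQ hf _).contDiffAt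
    (hQ.mem_nhds hp)).differentiableAt one_ne_zero) _

theorem eventually_discreteLap_le {f : F × EuclideanSpace ℝ (Fin d) → ℝ}
    {C Q : Set (F × EuclideanSpace ℝ (Fin d))} (hC : IsCompact C) (hQ : IsOpen Q) (hCQ : C ⊆ Q)
    (hf : ContDiffOn ℝ 2 f Q) {ε : ℝ} (hε : 0 < ε) :
    ∀ᶠ h in 𝓝[>] (0 : ℝ), ∀ p ∈ C, discreteLap h (fun y => f (p.1, y)) p.2 ≤
      spaceLap (fun y => f (p.1, y)) p.2 + ε := by
  have hunif := eventually_all.2 fun i : Fin d => eventually_mem_and_abs_sub_lt hC hQ hCQ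
    (continuousOn_second_fderiv_apply hQ hf (0, EuclideanSpace.single i 1))
    (show 0 < ε / (d + 1) by positivity)
  filter_upwards [hunif, self_mem_nhdsWithin] with h hunif hh p hp
  replace hh : 0 < h := hh
  have hnear (i : Fin d) (s : ℝ) (hs : s ∈ Icc (-h) h) := hunif i p hp
    (p + s • (0, EuclideanSpace.single i 1)) (by
      rw [dist_self_add_right, norm_smul]
      simpa using abs_le.2 hs)
  have hsum : discreteLap h (fun y => f (p.1, y)) p.2 ≤ ∑ i, (fderiv ℝ
      (fun q => fderiv ℝ f q (0, EuclideanSpace.single i 1)) p (0, EuclideanSpace.single i 1)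
        + ε / (d + 1)) := by
    rw [discreteLap, div_le_iff₀ (by positivity), Finset.sum_mul]
    gcongr with i
    have hdiff := second_difference_le_of_contDiffOn hQ hf hh.le (fun s hs => (hnear i s hs).1)
      (fun s hs => (sub_lt_iff_lt_add'.1 (abs_sub_lt_iff.1 (hnear i s hs).2).2).le)
    rwa [show p + h • (0, EuclideanSpace.single i 1) = (p.1, p.2 + h • EuclideanSpace.single i 1)
        from Prod.ext (by simp) (by simp),
      show p - h • (0, EuclideanSpace.single i 1) = (p.1, p.2 - h • EuclideanSpace.single i 1)
        from Prod.ext (by simp) (by simp)] at hdiff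
  refine hsum.trans ?_
  rw [Finset.sum_add_distrib, spaceLap_slice hQ hf (hCQ hp), Finset.sum_const, Finset.card_univ,
    Fintype.card_fin, nsmul_eq_mul, mul_div_assoc']
  gcongr
  rw [div_le_iff₀ (by positivity)]
  linarith

theorem eventually_abs_discreteLap_sub_le {φ : EuclideanSpace ℝ (Fin d) → ℝ}
    {K : Set (EuclideanSpace ℝ (Fin d))} (hφ : ContDiff ℝ 2 φ) (hK : IsCompact K) {ε : ℝ}
    (hε : 0 < ε) :
    ∀ᶠ h in 𝓝[>] (0 : ℝ), ∀ x ∈ K, |discreteLap h φ x - spaceLap φ x| ≤ ε := by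
  have key {ψ : EuclideanSpace ℝ (Fin d) → ℝ} (hψ : ContDiff ℝ 2 ψ) :=
    eventually_discreteLap_le (f := fun p : ℝ × _ => ψ p.2) (isCompact_singleton.prod hK)
      isOpen_univ (subset_univ ({0} ×ˢ K)) (hψ.comp contDiff_snd).contDiffOn hε
  have hneg (x : EuclideanSpace ℝ (Fin d)) : spaceLap (fun y => -φ y) x = -spaceLap φ x := by
    simp [spaceLap, fderiv_fun_neg]
  filter_upwards [key hφ, key hφ.neg] with h hle hge x hx
  have hge := hge (0, x) ⟨rfl, hx⟩
  rw [discreteLap_neg, hneg] at hge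
  exact abs_le.2 ⟨by linarith, by linarith [hle (0, x) ⟨rfl, hx⟩]⟩

end DiscreteLaplacian

section Parts

variable {d : ℕ} {φ w : EuclideanSpace ℝ (Fin d) → ℝ}

theorem continuous_spaceLap (hφ : ContDiff ℝ 2 φ) : Continuous (spaceLap φ) := by
  unfold spaceLap
  exact continuous_finsetSum _ fun i _ => continuousOn_univ.1
    (continuousOn_second_fderiv_apply isOpen_univ hφ.contDiffOn _)

theorem spaceLap_eq_zero_of_notMem_tsupport {x : EuclideanSpace ℝ (Fin d)} (hx : x ∉ tsupport φ) :
    spaceLap φ x = 0 := by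
  refine Finset.sum_eq_zero fun i _ => ?_
  have hfd : x ∉ tsupport (fderiv ℝ (fun y => fderiv ℝ φ y (EuclideanSpace.single i 1))) :=
    fun h => hx (tsupport_fderiv_apply_subset ℝ _ (tsupport_fderiv_subset ℝ h))
  rw [image_eq_zero_of_notMem_tsupport hfd, zero_apply]

theorem tsupport_max_neg_spaceLap_subset (φ : EuclideanSpace ℝ (Fin d) → ℝ) :
    tsupport (fun x => max (-spaceLap φ x) 0) ⊆ tsupport φ := by
  refine closure_minimal (fun x hx => ?_) (isClosed_tsupport φ)
  contrapose! hx
  simp [spaceLap_eq_zero_of_notMem_tsupport hx]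

theorem integrable_mul_of_hasCompactSupport (hφ : Continuous φ) (hφc : HasCompactSupport φ)
    (hw : Continuous w) : Integrable fun x => φ x * w x :=
  (hφ.mul hw).integrable_of_hasCompactSupport hφc.mul_right

theorem integrable_mul_comp_add_sub (hw : Continuous w) (hφ : Continuous φ)
    (hφc : HasCompactSupport φ) (v : EuclideanSpace ℝ (Fin d)) :
    Integrable fun x => w x * (φ (x + v) - φ x) :=
  Continuous.integrable_of_hasCompactSupport (by fun_prop)
    ((hφc.comp_homeomorph (Homeomorph.addRight v)).sub hφc).mul_left

theorem integral_mul_comp_add_sub (hw : Continuous w) (hφ : Continuous φ)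
    (hφc : HasCompactSupport φ) (v : EuclideanSpace ℝ (Fin d)) :
    ∫ x, w x * (φ (x + v) - φ x) = ∫ x, φ x * (w (x + -v) - w x) := by
  have hInt (c : EuclideanSpace ℝ (Fin d)) : Integrable fun x => φ x * w (x + c) :=
    integrable_mul_of_hasCompactSupport hφ hφc (by fun_prop)
  have hshift : ∫ x, w x * φ (x + v) = ∫ x, φ x * w (x + -v) := by
    rw [← integral_add_right_eq_self (fun x => w x * φ (x + v)) (-v)]
    simp only [neg_add_cancel_right, mul_comm]
  have hInt₀ : Integrable fun x => φ x * w x := by simpa using hInt 0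
  have hInt₁ : Integrable fun x => w x * φ (x + v) := by
    simpa [mul_comm] using (hInt (-v)).comp_add_right v
  simp only [mul_sub, mul_comm (w _) (φ _)] at hInt₁ hshift ⊢
  rw [integral_sub hInt₁ hInt₀, integral_sub (hInt _) hInt₀, hshift]

theorem integral_mul_second_difference_comm (hw : Continuous w) (hφ : Continuous φ)
    (hφc : HasCompactSupport φ) (v : EuclideanSpace ℝ (Fin d)) :
    ∫ x, w x * (φ (x + v) - 2 * φ x + φ (x - v)) =
      ∫ x, φ x * (w (x + v) - 2 * w x + w (x - v)) := by
  have hsplit (f g : EuclideanSpace ℝ (Fin d) → ℝ) (x : EuclideanSpace ℝ (Fin d)) :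
      f x * (g (x + v) - 2 * g x + g (x - v)) =
        f x * (g (x + v) - g x) + f x * (g (x + -v) - g x) := by
    rw [← sub_eq_add_neg]
    ring
  have hInt (c : EuclideanSpace ℝ (Fin d)) : Integrable fun x => φ x * (w (x + c) - w x) :=
    integrable_mul_of_hasCompactSupport hφ hφc (by fun_prop)
  simp only [hsplit]
  rw [integral_add (integrable_mul_comp_add_sub hw hφ hφc v)
      (integrable_mul_comp_add_sub hw hφ hφc (-v)), integral_add (hInt v) (hInt (-v)),
    integral_mul_comp_add_sub hw hφ hφc, integral_mul_comp_add_sub hw hφ hφc, neg_neg, add_comm]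

theorem integral_mul_discreteLap_comm (hw : Continuous w) (hφ : Continuous φ)
    (hφc : HasCompactSupport φ) (h : ℝ) :
    ∫ x, w x * discreteLap h φ x = ∫ x, φ x * discreteLap h w x := by
  have hInt (v : EuclideanSpace ℝ (Fin d)) :
      Integrable fun x => φ x * (w (x + v) - 2 * w x + w (x - v)) :=
    integrable_mul_of_hasCompactSupport hφ hφc (by fun_prop)
  have hInt' (v : EuclideanSpace ℝ (Fin d)) :
      Integrable fun x => w x * (φ (x + v) - 2 * φ x + φ (x - v)) := by
    refine Continuous.integrable_of_hasCompactSupport (by fun_prop) (HasCompactSupport.mul_left ?_)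
    exact ((hφc.comp_homeomorph (Homeomorph.addRight v)).sub hφc.mul_left).add
      (hφc.comp_homeomorph (Homeomorph.subRight v))
  simp only [discreteLap, mul_div_assoc', integral_div, Finset.mul_sum]
  rw [integral_finsetSum _ fun i _ => hInt' _, integral_finsetSum _ fun i _ => hInt _]
  simp only [integral_mul_second_difference_comm hw hφ hφc]

theorem tendsto_integral_mul_discreteLap (hw : Continuous w) (hφ : ContDiff ℝ 2 φ)
    (hφc : HasCompactSupport φ) :
    Tendsto (fun h => ∫ x, w x * discreteLap h φ x) (𝓝[>] 0) (𝓝 (∫ x, w x * spaceLap φ x)) := by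
  have hK : IsCompact (cthickening 1 (tsupport φ)) := hφc.isCompact.cthickening
  have hL := continuous_spaceLap hφ
  have hbound : Integrable ((cthickening 1 (tsupport φ)).indicator
      fun x => |w x| * (|spaceLap φ x| + 1)) :=
    (Continuous.continuousOn (by fun_prop)).integrableOn_compact hK |>.integrable_indicator
      hK.measurableSet
  refine tendsto_integral_filter_of_dominated_convergence _
    (Eventually.of_forall fun h =>
      (hw.mul (continuous_discreteLap hφ.continuous h)).aestronglyMeasurable) ?_ hbound
    (Eventually.of_forall fun x => Tendsto.const_mul _ ?_)
  · filter_upwards [eventually_abs_discreteLap_sub_le hφ hK one_pos, Ioo_mem_nhdsGT one_pos]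
      with h hh hh1
    refine Eventually.of_forall fun x => ?_
    by_cases hx : x ∈ cthickening 1 (tsupport φ)
    · rw [indicator_of_mem hx, norm_mul, Real.norm_eq_abs, Real.norm_eq_abs]
      have htri := abs_sub_abs_le_abs_sub (discreteLap h φ x) (spaceLap φ x)
      gcongr
      linarith [hh x hx]
    · rw [indicator_of_notMem hx, discreteLap_eq_zero, mul_zero, norm_zero]
      refine fun y hy => image_eq_zero_of_notMem_tsupport fun hyφ => hx ?_
      exact mem_cthickening_of_dist_le x y 1 _ hyφ (hy.trans (abs_le.2 ⟨by linarith [hh1.1],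
        hh1.2.le⟩))
  · refine Metric.tendsto_nhds.2 fun ε hε => ?_
    filter_upwards [eventually_abs_discreteLap_sub_le hφ (isCompact_singleton (x := x))
      (half_pos hε)] with h hh
    exact (hh x rfl).trans_lt (half_lt_self hε)

theorem integral_mul_spaceLap_le {B : EuclideanSpace ℝ (Fin d) → ℝ} (hw : Continuous w)
    (hB : Continuous B) (hφ : ContDiff ℝ 2 φ) (hφc : HasCompactSupport φ) (hφ0 : ∀ x, 0 ≤ φ x)
    (hle : ∀ᶠ h in 𝓝[>] (0 : ℝ), ∀ x ∈ tsupport φ, discreteLap h w x ≤ B x) :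
    ∫ x, w x * spaceLap φ x ≤ ∫ x, φ x * B x := by
  refine le_of_tendsto (tendsto_integral_mul_discreteLap hw hφ hφc) ?_
  filter_upwards [hle] with h hh
  rw [integral_mul_discreteLap_comm hw hφ.continuous hφc]
  refine integral_mono (integrable_mul_of_hasCompactSupport hφ.continuous hφc
    (continuous_discreteLap hw h)) (integrable_mul_of_hasCompactSupport hφ.continuous hφc hB)
    fun x => ?_
  by_cases hx : x ∈ tsupport φ
  · exact mul_le_mul_of_nonneg_left (hh x hx) (hφ0 x)
  · simp [image_eq_zero_of_notMem_tsupport hx]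

end Parts

section ClassicalSolutions

namespace IsFDESol

variable {d : ℕ} {m : ℝ} {Q C : Set (ℝ × EuclideanSpace ℝ (Fin d))}
  {u : ℝ → EuclideanSpace ℝ (Fin d) → ℝ} {ε : ℝ}

theorem comp_add_time (hu : IsFDESol m Q u) (e : ℝ) :
    IsFDESol m ((fun p => (p.1 + e, p.2)) ⁻¹' Q) (fun s => u (s + e)) := by
  refine ⟨fun p hp => hu.1 _ hp, hu.2.1.comp (by fun_prop) (mapsTo_preimage _ _), fun p hp => ?_⟩
  rw [deriv_comp_add_const (fun s => u s p.2)]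
  exact hu.2.2 _ hp

theorem hasDerivAt_time (hu : IsFDESol m Q u) (hQ : IsOpen Q)
    {p : ℝ × EuclideanSpace ℝ (Fin d)} (hp : p ∈ Q) :
    HasDerivAt (fun s => u s p.2)
      (fderiv ℝ (fun q : ℝ × EuclideanSpace ℝ (Fin d) => u q.1 q.2) p (1, 0)) p.1 := by
  have hdiff : DifferentiableAt ℝ (fun q : ℝ × EuclideanSpace ℝ (Fin d) => u q.1 q.2) p :=
    (hu.2.1.contDiffAt (hQ.mem_nhds hp)).differentiableAt (by simp)
  exact hdiff.hasFDerivAt.comp_hasDerivAt p.1 ((hasDerivAt_id p.1).prodMk (hasDerivAt_const _ p.2))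

theorem continuousOn_deriv_time (hu : IsFDESol m Q u) (hQ : IsOpen Q) :
    ContinuousOn (fun p : ℝ × EuclideanSpace ℝ (Fin d) => deriv (fun s => u s p.2) p.1) Q :=
  ((hu.2.1.continuousOn_fderiv_of_isOpen hQ (by simp)).clm_apply continuousOn_const).congr
    fun _ hp => (hu.hasDerivAt_time hQ hp).deriv

theorem eventually_discreteLap_rpow_le (hu : IsFDESol m Q u) (hQ : IsOpen Q) (hC : IsCompact C)
    (hCQ : C ⊆ Q) (hε : 0 < ε) :
    ∀ᶠ h in 𝓝[>] (0 : ℝ), ∀ p ∈ C,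
      discreteLap h (fun y => u p.1 y ^ m) p.2 ≤ deriv (fun s => u s p.2) p.1 + ε := by
  have hsmooth : ContDiffOn ℝ 2 (fun p : ℝ × EuclideanSpace ℝ (Fin d) => u p.1 p.2 ^ m) Q :=
    (hu.2.1.rpow_const_of_ne fun p hp => (hu.1 p hp).ne').of_le
      (WithTop.coe_le_coe.2 (le_top (a := (2 : ℕ∞))))
  filter_upwards [eventually_discreteLap_le hC hQ hCQ hsmooth hε] with h hh p hp
  rw [hu.2.2 p (hCQ hp)]
  exact hh p hp

theorem eventually_deriv_le_slope (hu : IsFDESol m Q u) (hQ : IsOpen Q) (hC : IsCompact C)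
    (hCQ : C ⊆ Q) (hε : 0 < ε) :
    ∀ᶠ δ in 𝓝[>] (0 : ℝ), ∀ p ∈ C, ∀ τ ∈ Ioc 0 δ,
      deriv (fun s => u s p.2) p.1 ≤ (u p.1 p.2 - u (p.1 - τ) p.2) / τ + ε := by
  filter_upwards [eventually_mem_and_abs_sub_lt hC hQ hCQ (hu.continuousOn_deriv_time hQ) hε]
    with δ hδ p hp τ hτ
  have hnear (s : ℝ) (hs : s ∈ Icc (p.1 - τ) p.1) := hδ p hp (s, p.2) (by
    rw [Prod.dist_eq, dist_self, Real.dist_eq, max_eq_left (abs_nonneg _),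
      abs_of_nonneg (by linarith [hs.2])]
    linarith [hs.1, hτ.2])
  have hderiv (s : ℝ) (hs : s ∈ Icc (p.1 - τ) p.1) := hu.hasDerivAt_time hQ (hnear s hs).1
  obtain ⟨ξ, hξ, hslope⟩ := exists_deriv_eq_slope (fun s => u s p.2)
    (sub_lt_self p.1 hτ.1) (fun s hs => (hderiv s hs).continuousAt.continuousWithinAt)
    (fun s hs => (hderiv s (Ioo_subset_Icc_self hs)).differentiableAt.differentiableWithinAt)
  rw [sub_sub_cancel] at hslope
  linarith [(abs_lt.1 (hnear ξ (Ioo_subset_Icc_self hξ)).2).2]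

theorem exists_time_upper_lipschitz (hu : IsFDESol m Q u) (hQ : IsOpen Q) {a S : ℝ}
    {K : Set (EuclideanSpace ℝ (Fin d))} (hK : IsCompact K) (hKQ : Icc a S ×ˢ K ⊆ Q) :
    ∃ L > 0, ∀ x ∈ K, ∀ s s', a ≤ s → s ≤ s' → s' ≤ S → u s' x - u s x ≤ L * (s' - s) := by
  obtain ⟨L, hL⟩ := (isCompact_Icc.prod hK).exists_bound_of_continuousOn
    ((hu.continuousOn_deriv_time hQ).mono hKQ)
  refine ⟨max L 1, by positivity, fun x hx s s' hs hss' hs' => ?_⟩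
  have hmem (r : ℝ) (hr : r ∈ Icc s s') : (r, x) ∈ Icc a S ×ˢ K :=
    ⟨⟨hs.trans hr.1, hr.2.trans hs'⟩, hx⟩
  have hderiv (r : ℝ) (hr : r ∈ Icc s s') := hu.hasDerivAt_time hQ (hKQ (hmem r hr))
  exact (convex_Icc s s').image_sub_le_mul_sub_of_deriv_le
    (fun r hr => (hderiv r hr).continuousAt.continuousWithinAt)
    (fun r hr => (hderiv r (interior_subset hr)).differentiableAt.differentiableWithinAt)
    (fun r hr => (le_abs_self _).trans ((hL _ (hmem r (interior_subset hr))).trans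
      (le_max_left _ _))) s (left_mem_Icc.2 hss') s' (right_mem_Icc.2 hss') hss'

theorem exists_pos_le (hu : IsFDESol m Q u) (hC : IsCompact C) (hCQ : C ⊆ Q) :
    ∃ c > 0, ∀ p ∈ C, c ≤ u p.1 p.2 :=
  hC.exists_forall_le' (hu.2.1.continuousOn.mono hCQ) fun p hp => hu.1 p (hCQ hp)

end IsFDESol

end ClassicalSolutions

section RunningInf

variable {X : Type*} {b : ℝ} {G : ℝ → X → ℝ} {θ σ : ℝ} {x : X}

/-- The infimum of `G · x` over the times between `b` and `θ`. The unordered interval keeps the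
definition jointly continuous in `(θ, x)` also for `θ < b`. -/
noncomputable def runningInf (b : ℝ) (G : ℝ → X → ℝ) (θ : ℝ) (x : X) : ℝ :=
  sInf ((fun σ => G σ x) '' uIcc b θ)

theorem continuous_runningInf [TopologicalSpace X]
    (hG : Continuous fun p : ℝ × X => G p.1 p.2) :
    Continuous fun p : ℝ × X => runningInf b G p.1 p.2 := by
  have himage (p : ℝ × X) : runningInf b G p.1 p.2 =
      sInf ((fun s => G (AffineMap.lineMap b p.1 s) p.2) '' Icc (0 : ℝ) 1) := by
    rw [runningInf, ← segment_eq_uIcc, segment_eq_image_lineMap, image_image]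
  simp only [himage]
  refine IsCompact.continuous_sInf (f := fun (p : ℝ × X) s => G (AffineMap.lineMap b p.1 s) p.2)
    isCompact_Icc ?_
  have hline : Continuous fun q : (ℝ × X) × ℝ => (AffineMap.lineMap b q.1.1 q.2 : ℝ) := by
    simp only [AffineMap.lineMap_apply_module]
    fun_prop
  exact hG.comp (hline.prodMk (by fun_prop : Continuous fun q : (ℝ × X) × ℝ => q.1.2))

theorem exists_runningInf_eq (hG : ∀ x, Continuous fun σ => G σ x) (b θ : ℝ) (x : X) :
    ∃ σ ∈ uIcc b θ, runningInf b G θ x = G σ x ∧ ∀ τ ∈ uIcc b θ, G σ x ≤ G τ x :=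
  isCompact_uIcc.exists_sInf_image_eq_and_le nonempty_uIcc (hG x).continuousOn

theorem runningInf_le (hG : ∀ x, Continuous fun σ => G σ x) (hσ : σ ∈ Icc b θ) :
    runningInf b G θ x ≤ G σ x := by
  obtain ⟨τ, -, hτ, hmin⟩ := exists_runningInf_eq hG b θ x
  exact hτ.trans_le (hmin σ (Icc_subset_uIcc hσ))

theorem runningInf_self (b : ℝ) (G : ℝ → X → ℝ) (x : X) : runningInf b G b x = G b x := by
  simp [runningInf]

theorem runningInf_pos (hG : ∀ x, Continuous fun σ => G σ x) (hpos : ∀ σ x, 0 < G σ x) (b θ : ℝ)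
    (x : X) : 0 < runningInf b G θ x := by
  obtain ⟨σ, -, hσ, -⟩ := exists_runningInf_eq hG b θ x
  exact hσ ▸ hpos σ x

theorem runningInf_antitoneOn (hG : ∀ x, Continuous fun σ => G σ x) (b : ℝ) (x : X) :
    AntitoneOn (fun θ => runningInf b G θ x) (Ici b) := by
  intro θ hθ θ' _ hle
  obtain ⟨σ, hσ, heq, -⟩ := exists_runningInf_eq hG b θ x
  rw [uIcc_of_le hθ] at hσ
  exact (runningInf_le hG ⟨hσ.1, hσ.2.trans hle⟩).trans_eq heq.symm

theorem exists_late_runningInf_eq (hG : ∀ x, Continuous fun σ => G σ x) {c : ℝ} (hθ : b ≤ θ)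
    (hanti : AntitoneOn (fun σ => G σ x) (Icc b (min θ c))) :
    ∃ σ ∈ Icc b θ, runningInf b G θ x = G σ x ∧ (σ = θ ∨ c ≤ σ) := by
  obtain ⟨σ, hσ, heq, hmin⟩ := exists_runningInf_eq hG b θ x
  rw [uIcc_of_le hθ] at hσ hmin
  rcases le_or_gt (min θ c) σ with hlate | hearly
  · exact ⟨σ, hσ, heq, (min_le_iff.1 hlate).imp_left (le_antisymm hσ.2)⟩
  · have hmem : min θ c ∈ Icc b θ := ⟨hσ.1.trans hearly.le, min_le_left _ _⟩
    refine ⟨min θ c, hmem, heq.trans (le_antisymm (hmin _ hmem) ?_), ?_⟩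
    · exact hanti ⟨hσ.1, hearly.le⟩ ⟨hmem.1, le_rfl⟩ hearly.le
    · exact (min_choice θ c).imp_right Eq.ge

end RunningInf

section Envelope

/-- The largest minorant `W` of `σ ^ n * G σ x` on the times `σ ≥ b` for which `σ ^ (-n) * W σ x` is
nonincreasing in `σ`. -/
noncomputable def envelope {X : Type*} (n b : ℝ) (G : ℝ → X → ℝ) (θ : ℝ) (x : X) : ℝ :=
  θ ^ n * runningInf b G θ x

section Basic

variable {X : Type*} {n b : ℝ} {G : ℝ → X → ℝ} {θ σ : ℝ} {x : X}

theorem continuous_envelope [TopologicalSpace X] (hn : 0 ≤ n)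
    (hG : Continuous fun p : ℝ × X => G p.1 p.2) :
    Continuous fun p : ℝ × X => envelope n b G p.1 p.2 :=
  ((continuous_rpow_const hn).comp continuous_fst).mul (continuous_runningInf hG)

theorem envelope_self (n b : ℝ) (G : ℝ → X → ℝ) (x : X) : envelope n b G b x = b ^ n * G b x := by
  rw [envelope, runningInf_self]

theorem envelope_pos (hG : ∀ x, Continuous fun σ => G σ x) (hpos : ∀ σ x, 0 < G σ x) (hθ : 0 < θ)
    (x : X) : 0 < envelope n b G θ x :=
  mul_pos (rpow_pos_of_pos hθ n) (runningInf_pos hG hpos b θ x)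

theorem envelope_le (hG : ∀ x, Continuous fun σ => G σ x) (hθ : 0 ≤ θ) (hbθ : b ≤ θ) (x : X) :
    envelope n b G θ x ≤ θ ^ n * G θ x := by
  unfold envelope
  gcongr
  exact runningInf_le hG ⟨hbθ, le_rfl⟩

theorem envelope_le_div_rpow_mul (hG : ∀ x, Continuous fun σ => G σ x) (hb : 0 < b) (hbσ : b ≤ σ)
    (hσθ : σ ≤ θ) (x : X) : envelope n b G θ x ≤ (θ / σ) ^ n * envelope n b G σ x := by
  have hσ : 0 < σ := hb.trans_le hbσ
  have hθ : 0 < θ := hσ.trans_le hσθ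
  rw [envelope, envelope, ← mul_assoc, ← mul_rpow (by positivity) hσ.le, div_mul_cancel₀ _ hσ.ne']
  gcongr
  exact runningInf_antitoneOn hG b x hbσ (hbσ.trans hσθ) hσθ

end Basic

theorem antitoneOn_rpow_neg_mul {n L : ℝ} (hn : 1 ≤ n) (hL : 0 ≤ L) {v : ℝ → ℝ} {I : Set ℝ}
    (hI : ∀ s ∈ I, 0 < s) (hv : ∀ s ∈ I, s * L ≤ v s)
    (hlip : ∀ s ∈ I, ∀ s' ∈ I, s ≤ s' → v s' - v s ≤ L * (s' - s)) :
    AntitoneOn (fun s => s ^ (-n) * v s) I := by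
  intro s hs s' hs' hle
  have hs0 := hI s hs
  have hs0' := hI s' hs'
  have hv0 : 0 ≤ v s := (mul_nonneg hs0.le hL).trans (hv s hs)
  have hgrowth : v s' ≤ (s' / s) ^ n * v s := calc
    v s' ≤ s' / s * v s := by
      rw [div_mul_eq_mul_div, le_div_iff₀ hs0]
      nlinarith [hlip s hs s' hs' hle, mul_le_mul_of_nonneg_right (hv s hs) (sub_nonneg.2 hle)]
    _ ≤ (s' / s) ^ n * v s := by
      gcongr
      exact self_le_rpow_of_one_le ((one_le_div hs0).2 hle) hn
  have hpos : 0 < s ^ n := rpow_pos_of_pos hs0 n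
  have hpos' : 0 < s' ^ n := rpow_pos_of_pos hs0' n
  rw [div_rpow hs0'.le hs0.le] at hgrowth
  simp only [rpow_neg hs0.le, rpow_neg hs0'.le]
  calc (s' ^ n)⁻¹ * v s' ≤ (s' ^ n)⁻¹ * (s' ^ n / s ^ n * v s) := by gcongr
    _ = (s ^ n)⁻¹ * v s := by field_simp

variable {d : ℕ} {m n b S : ℝ} {K : Set (EuclideanSpace ℝ (Fin d))}

/-- `W` is a supersolution of `∂ₜ W = Δ(W ^ m)` on `[b, S] × K`, with the time derivative replaced
by backward difference quotients and the Laplacian by discrete ones, up to an error which vanishes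
uniformly as first the space step `h` and then the time step `τ ≤ δ` tend to `0`. -/
def IsDiscreteSupersol (m b S : ℝ) (K : Set (EuclideanSpace ℝ (Fin d)))
    (W : ℝ → EuclideanSpace ℝ (Fin d) → ℝ) : Prop :=
  ∀ ε > 0, ∀ᶠ δ in 𝓝[>] (0 : ℝ), ∀ᶠ h in 𝓝[>] (0 : ℝ), ∀ θ ∈ Icc b S, ∀ τ ∈ Ioc 0 δ, b ≤ θ - τ →
    ∀ x ∈ K, discreteLap h (fun y => W θ y ^ m) x ≤ (W θ x - W (θ - τ) x) / τ + ε

theorem IsFDESol.isDiscreteSupersol {Q : Set (ℝ × EuclideanSpace ℝ (Fin d))}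
    {u : ℝ → EuclideanSpace ℝ (Fin d) → ℝ} (hu : IsFDESol m Q u) (hQ : IsOpen Q)
    (hK : IsCompact K) (hKQ : Icc b S ×ˢ K ⊆ Q) : IsDiscreteSupersol m b S K u := by
  intro ε hε
  have hC : IsCompact (Icc b S ×ˢ K) := isCompact_Icc.prod hK
  filter_upwards [hu.eventually_deriv_le_slope hQ hC hKQ (half_pos hε)] with δ hδ
  filter_upwards [hu.eventually_discreteLap_rpow_le hQ hC hKQ (half_pos hε)] with h hh
  intro θ hθ τ hτ _ x hx
  linarith [hδ (θ, x) ⟨hθ, hx⟩ τ hτ, hh (θ, x) ⟨hθ, hx⟩]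

theorem IsDiscreteSupersol.congr {V W : ℝ → EuclideanSpace ℝ (Fin d) → ℝ} {r : ℝ}
    (hW : IsDiscreteSupersol m b S K W) (hr : 0 < r)
    (heq : ∀ σ ∈ Icc b S, ∀ x ∈ cthickening r K, V σ x = W σ x) :
    IsDiscreteSupersol m b S K V := by
  intro ε hε
  filter_upwards [hW ε hε] with δ hδ
  filter_upwards [hδ, Ioo_mem_nhdsGT hr] with h hh hhr θ hθ τ hτ hbτ x hx
  have hxr : x ∈ cthickening r K := self_subset_cthickening K hx
  refine (discreteLap_le_of_touching (g := fun y => W θ y ^ m) (fun y hy => ?_)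
    (by rw [heq θ hθ x hxr])).trans ?_
  · rw [abs_of_pos hhr.1] at hy
    rw [heq θ hθ y (mem_cthickening_of_dist_le y x r K hx
      ((dist_comm y x).trans_le (hy.trans hhr.2.le)))]
  · rw [heq θ hθ x hxr, heq (θ - τ) ⟨hbτ, by linarith [hθ.2, hτ.1]⟩ x hxr]
    exact hh θ hθ τ hτ hbτ x hx

variable {G : ℝ → EuclideanSpace ℝ (Fin d) → ℝ} {θ σ τ lam : ℝ} {x : EuclideanSpace ℝ (Fin d)}

theorem discreteLap_envelope_rpow_le (hm : 0 ≤ m) (hG : ∀ x, Continuous fun σ => G σ x)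
    (hpos : ∀ σ x, 0 < G σ x) (hb : 0 < b) (hlam : 0 < lam) (hσ : σ ∈ Icc b (lam * σ))
    (heq : runningInf b G (lam * σ) x = G σ x) (h : ℝ) :
    discreteLap h (fun y => envelope n b G (lam * σ) y ^ m) x ≤
      lam ^ (n * m) * discreteLap h (fun y => (σ ^ n * G σ y) ^ m) x := by
  have hσ0 : 0 < σ := hb.trans_le hσ.1
  have hscale (y : EuclideanSpace ℝ (Fin d)) :
      lam ^ (n * m) * (σ ^ n * G σ y) ^ m = ((lam * σ) ^ n * G σ y) ^ m := by
    rw [rpow_mul hlam.le, ← mul_rpow (by positivity)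
      (mul_nonneg (by positivity) (hpos σ y).le), ← mul_assoc, ← mul_rpow hlam.le hσ0.le]
  rw [← discreteLap_const_mul]
  refine discreteLap_le_of_touching (fun y _ => ?_) ?_
  · rw [hscale]
    exact rpow_le_rpow (envelope_pos hG hpos (by positivity) y).le
      (mul_le_mul_of_nonneg_left (runningInf_le hG hσ) (by positivity)) hm
  · rw [hscale, envelope, heq]

theorem slope_le_slope_envelope (hnm : n * m + 1 = n) (hG : ∀ x, Continuous fun σ => G σ x)
    (hb : 0 < b) (hlam : 1 ≤ lam) (hτ : 0 < τ) (hστ : b ≤ σ - τ)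
    (heq : runningInf b G (lam * σ) x = G σ x) :
    lam ^ (n * m) * ((σ ^ n * G σ x - (σ - τ) ^ n * G (σ - τ) x) / τ) ≤
      (envelope n b G (lam * σ) x - envelope n b G (lam * (σ - τ)) x) / (lam * τ) := by
  have hlam0 : 0 < lam := one_pos.trans_le hlam
  have hστ0 : 0 < σ - τ := hb.trans_le hστ
  have hpow : lam ^ n = lam ^ (n * m) * lam := by rw [← rpow_add_one hlam0.ne', hnm]
  have hnow : envelope n b G (lam * σ) x = lam ^ n * (σ ^ n * G σ x) := by
    rw [envelope, heq, mul_rpow hlam0.le (by linarith), mul_assoc]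
  have hbefore : envelope n b G (lam * (σ - τ)) x ≤ lam ^ n * ((σ - τ) ^ n * G (σ - τ) x) := by
    rw [envelope, mul_rpow hlam0.le hστ0.le, mul_assoc]
    have hle : runningInf b G (lam * (σ - τ)) x ≤ G (σ - τ) x :=
      runningInf_le hG ⟨hστ, le_mul_of_one_le_left hστ0.le hlam⟩
    gcongr
  calc lam ^ (n * m) * ((σ ^ n * G σ x - (σ - τ) ^ n * G (σ - τ) x) / τ)
      = (lam ^ n * (σ ^ n * G σ x) - lam ^ n * ((σ - τ) ^ n * G (σ - τ) x)) / (lam * τ) := by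
        rw [hpow]; field_simp
    _ ≤ _ := by rw [hnow]; gcongr

-- The equation is invariant under `u(θ, x) ↦ λⁿ u(θ / λ, x)`, so the envelope is an infimum of
-- solutions. If the infimum at `θ` is attained at `σ`, the backward step `τ` at `θ` corresponds to
-- the step `τ / λ` at `σ`, `λ = θ / σ`; the monotonicity of `G` near `b` leaves room for it.
theorem isDiscreteSupersol_envelope (hm : 0 ≤ m) (hn : 0 ≤ n) (hnm : n * m + 1 = n)
    (hG : ∀ x, Continuous fun σ => G σ x) (hpos : ∀ σ x, 0 < G σ x) (hb : 0 < b) (hbS : b ≤ S)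
    (hanti : ∀ x ∈ K, AntitoneOn (fun σ => G σ x) (Icc b (min S (2 * b))))
    (hsuper : IsDiscreteSupersol m b S K fun σ x => σ ^ n * G σ x) :
    IsDiscreteSupersol m b S K (envelope n b G) := by
  intro ε hε
  have hS : 0 < S := hb.trans_le hbS
  have hM : 0 < (S / b) ^ (n * m) := by positivity
  filter_upwards [hsuper (ε / (S / b) ^ (n * m)) (by positivity), Ioo_mem_nhdsGT hb] with δ hδ hδb
  filter_upwards [hδ] with h hh θ hθ τ hτ hbτ x hx
  obtain ⟨σ, hσ, heq, hlate⟩ := exists_late_runningInf_eq (c := 2 * b) hG hθ.1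
    ((hanti x hx).mono (Icc_subset_Icc_right (min_le_min_right _ hθ.2)))
  have hσ0 : 0 < σ := hb.trans_le hσ.1
  obtain ⟨lam, rfl⟩ : ∃ lam, θ = lam * σ := ⟨θ / σ, (div_mul_cancel₀ θ hσ0.ne').symm⟩
  have hlam : 1 ≤ lam := le_of_mul_le_mul_right (by linarith [hσ.2]) hσ0
  have hlamS : lam ≤ S / b := by
    rw [le_div_iff₀ hb]
    exact (mul_le_mul_of_nonneg_left hσ.1 (by linarith)).trans hθ.2
  have hlam0 : 0 < lam := one_pos.trans_le hlam
  obtain ⟨τ', rfl⟩ : ∃ τ', τ = lam * τ' := ⟨τ / lam, (mul_div_cancel₀ τ hlam0.ne').symm⟩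
  have hτ0 : 0 < τ' := pos_of_mul_pos_right hτ.1 hlam0.le
  have hττ : τ' ≤ lam * τ' := le_mul_of_one_le_left hτ0.le hlam
  have hστ : b ≤ σ - τ' := by
    rcases hlate with hnow | h2b
    · linarith
    · linarith [hτ.2, hδb.2]
  have herr : lam ^ (n * m) * (ε / (S / b) ^ (n * m)) ≤ ε := by
    rw [mul_div_assoc', div_le_iff₀ hM, mul_comm]
    gcongr
  have hstep := hh σ ⟨hσ.1, hσ.2.trans hθ.2⟩ τ' ⟨hτ0, hττ.trans hτ.2⟩ hστ x hx
  have hslope := slope_le_slope_envelope hnm hG hb hlam hτ0 hστ heq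
  calc _ ≤ _ := discreteLap_envelope_rpow_le hm hG hpos hb hlam0 hσ heq h
    _ ≤ _ := mul_le_mul_of_nonneg_left hstep (by positivity)
    _ ≤ _ := by rw [mul_add, ← mul_sub]; exact add_le_add hslope herr

end Envelope

section IntegralInequalities

theorem le_gronwallBound_of_backward_slope_le {f : ℝ → ℝ} {b t α A : ℝ} (hbt : b ≤ t)
    (hf : ContinuousOn f (Icc b t))
    (hslope : ∀ θ ∈ Ioc b t, ∀ ε > 0, ∀ᶠ δ in 𝓝[>] (0 : ℝ),
      (f (θ - δ) - f θ) / δ ≤ α * f θ + A + ε) :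
    f b ≤ gronwallBound (f t) α A (t - b) := by
  have hcont : ContinuousOn (fun s => f (-s)) (Icc (-t) (-b)) :=
    hf.comp continuousOn_neg fun s hs => ⟨le_neg_of_le_neg hs.2, neg_le.1 hs.1⟩
  have hright (s : ℝ) (hs : s ∈ Ico (-t) (-b)) (r : ℝ) (hr : α * f (-s) + A < r) :
      ∃ᶠ z in 𝓝[>] s, (z - s)⁻¹ * (f (-z) - f (-s)) < r := by
    have hshift : Tendsto (fun z => z - s) (𝓝[>] s) (𝓝[>] 0) := by
      refine tendsto_nhdsWithin_iff.2 ⟨?_, ?_⟩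
      · exact Tendsto.mono_left ((continuous_sub_right s).tendsto' s 0 (sub_self s))
          nhdsWithin_le_nhds
      · filter_upwards [self_mem_nhdsWithin] with z hz using sub_pos.2 (mem_Ioi.1 hz)
    have hback := hshift.eventually (hslope (-s) ⟨by linarith [hs.2], by linarith [hs.1]⟩
      ((r - (α * f (-s) + A)) / 2) (by linarith))
    refine (hback.mono fun z hz => ?_).frequently
    rw [show -s - (z - s) = -z by ring, div_eq_inv_mul] at hz
    linarith
  have hbound := le_gronwallBound_of_liminf_deriv_right_le hcont hright le_rfl
    (fun s _ => le_rfl) (-b) (right_mem_Icc.2 (neg_le_neg hbt))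
  simpa only [neg_neg, sub_neg_eq_add, neg_add_eq_sub] using hbound

theorem le_exp_one_mul_of_backward_slope_le {f : ℝ → ℝ} {b t A : ℝ} (hbt : b < t) (hA : 0 ≤ A)
    (hf : ContinuousOn f (Icc b t))
    (hslope : ∀ θ ∈ Ioc b t, ∀ ε > 0, ∀ᶠ δ in 𝓝[>] (0 : ℝ),
      (f (θ - δ) - f θ) / δ ≤ (t - b)⁻¹ * f θ + A + ε) :
    f b ≤ exp 1 * (f t + A * (t - b)) := by
  have hpos : 0 < t - b := sub_pos.2 hbt
  refine (le_gronwallBound_of_backward_slope_le hbt.le hf hslope).trans ?_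
  rw [gronwallBound_of_K_ne_0 (inv_ne_zero hpos.ne')]
  simp only [inv_mul_cancel₀ hpos.ne', div_inv_eq_mul]
  nlinarith [mul_nonneg hA hpos.le]

theorem mul_rpow_le_mul_add_rpow {m n k α y : ℝ} (hm0 : 0 ≤ m) (hm1 : m ≤ 1)
    (hn : n * (1 - m) = 1) (hk : 0 ≤ k) (hα : 0 < α) (hy : 0 ≤ y) :
    k * y ^ m ≤ α * y + k ^ n * α ^ (-(n * m)) := by
  have hz : 0 ≤ k ^ n * α ^ (-(n * m)) := by positivity
  have hexp : -(n * m) * (1 - m) = -m := by linear_combination -m * hn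
  calc k * y ^ m = (α * y) ^ m * (k ^ n * α ^ (-(n * m))) ^ (1 - m) := by
        rw [mul_rpow hα.le hy, mul_rpow (by positivity) (by positivity), ← rpow_mul hk,
          ← rpow_mul hα.le, hn, rpow_one, hexp, rpow_neg hα.le]
        have := (rpow_pos_of_pos hα m).ne'
        field_simp
    _ ≤ m * (α * y) + (1 - m) * (k ^ n * α ^ (-(n * m))) :=
        geom_mean_le_arith_mean2_weighted hm0 (by linarith) (by positivity) hz (by ring)
    _ ≤ α * y + k ^ n * α ^ (-(n * m)) := by
        nlinarith [mul_nonneg hα.le hy]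

variable {d : ℕ} {m n b t S : ℝ} {φ : EuclideanSpace ℝ (Fin d) → ℝ}
  {W : ℝ → EuclideanSpace ℝ (Fin d) → ℝ}

theorem continuousOn_integral_mul {Ω : Set (EuclideanSpace ℝ (Fin d))} {I : Set ℝ} (hΩ : IsOpen Ω)
    (hφ : Continuous φ) (hφc : HasCompactSupport φ) (hφΩ : tsupport φ ⊆ Ω)
    (hW : ContinuousOn (fun p : ℝ × EuclideanSpace ℝ (Fin d) => W p.1 p.2) (I ×ˢ Ω)) :
    ContinuousOn (fun s => ∫ x, φ x * W s x) I := by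
  refine continuousOn_integral_of_compact_support hφc.isCompact ?_
    fun s x _ hx => by rw [image_eq_zero_of_notMem_tsupport hx, zero_mul]
  rintro ⟨s, x⟩ ⟨hs, -⟩
  by_cases hx : x ∈ Ω
  · refine (hφ.comp continuous_snd).continuousWithinAt.mul
      ((hW (s, x) ⟨hs, hx⟩).mono_of_mem_nhdsWithin ?_)
    rw [nhdsWithin_prod_eq]
    exact prod_mem_prod self_mem_nhdsWithin (nhdsWithin_le_nhds (hΩ.mem_nhds hx))
  · have hzero : Function.uncurry (fun s x => φ x * W s x) =ᶠ[𝓝 (s, x)] fun _ => 0 := by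
      have hφ0 := notMem_tsupport_iff_eventuallyEq.1 fun h => hx (hφΩ h)
      filter_upwards [(continuous_snd (X := ℝ)).continuousAt.eventually hφ0] with p hp
      simp only [Function.uncurry, hp, Pi.zero_apply, zero_mul]
    exact (continuousAt_const.congr hzero.symm).continuousWithinAt

theorem integral_mul_le_integral_mul_of_tsupport_subset {Ω : Set (EuclideanSpace ℝ (Fin d))}
    {v w : EuclideanSpace ℝ (Fin d) → ℝ} (hΩ : IsOpen Ω) (hφ : Continuous φ)
    (hφc : HasCompactSupport φ) (hφ0 : ∀ x, 0 ≤ φ x) (hφΩ : tsupport φ ⊆ Ω)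
    (hw : ContinuousOn w Ω) (hv : ∀ x, 0 ≤ v x) (hvw : ∀ x ∈ tsupport φ, v x ≤ w x) :
    ∫ x, φ x * v x ≤ ∫ x, φ x * w x := by
  have hcont : Continuous fun x => φ x * w x :=
    (hφ.continuousOn.mul hw).continuous_of_tsupport_subset hΩ
      ((tsupport_mul_subset_left (f := φ)).trans hφΩ)
  refine integral_mono_of_nonneg (.of_forall fun x => mul_nonneg (hφ0 x) (hv x))
    (hcont.integrable_of_hasCompactSupport hφc.mul_right) (.of_forall fun x => ?_)
  by_cases hx : x ∈ tsupport φ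
  · exact mul_le_mul_of_nonneg_left (hvw x hx) (hφ0 x)
  · simp only [image_eq_zero_of_notMem_tsupport hx, zero_mul, le_refl]

theorem IsDiscreteSupersol.eventually_slope_integral_le
    (hW : IsDiscreteSupersol m b S (tsupport φ) W) (hm : 0 ≤ m)
    (hWc : Continuous fun p : ℝ × EuclideanSpace ℝ (Fin d) => W p.1 p.2)
    (hφ : ContDiff ℝ 2 φ) (hφc : HasCompactSupport φ) (hφ0 : ∀ x, 0 ≤ φ x) {θ : ℝ}
    (hθ : θ ∈ Ioc b S) {ε : ℝ} (hε : 0 < ε) :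
    ∀ᶠ δ in 𝓝[>] (0 : ℝ), ((∫ x, φ x * W (θ - δ) x) - ∫ x, φ x * W θ x) / δ ≤
      (∫ x, W θ x ^ m * -spaceLap φ x) + ε := by
  have hI : 0 ≤ ∫ x, φ x := integral_nonneg hφ0
  have hslice (s : ℝ) : Continuous (W s) := hWc.comp (Continuous.prodMk_right s)
  have hInt (s : ℝ) : Integrable fun x => φ x * W s x :=
    integrable_mul_of_hasCompactSupport hφ.continuous hφc (hslice s)
  filter_upwards [hW (ε / ((∫ x, φ x) + 1)) (by positivity), Ioo_mem_nhdsGT (sub_pos.2 hθ.1)]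
    with δ hδ hδθ
  have hweak := integral_mul_spaceLap_le (w := fun y => W θ y ^ m)
    (B := fun x => (W θ x - W (θ - δ) x) / δ + ε / ((∫ x, φ x) + 1))
    ((hslice θ).rpow_const fun _ => .inr hm)
    ((((hslice θ).sub (hslice _)).div_const δ).add_const _) hφ hφc hφ0
    (hδ.mono fun h hh => hh θ ⟨hθ.1.le, hθ.2⟩ δ ⟨hδθ.1, le_rfl⟩ (by linarith [hδθ.2]))
  simp only [mul_add, mul_div_assoc', mul_sub] at hweak
  have hdiff : Integrable fun x => (φ x * W θ x - φ x * W (θ - δ) x) / δ :=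
    ((hInt θ).sub (hInt _)).div_const δ
  have hconst : Integrable fun x => φ x * ε / ((∫ x, φ x) + 1) :=
    ((hφ.continuous.integrable_of_hasCompactSupport hφc).mul_const ε).div_const _
  rw [integral_add hdiff hconst, integral_div, integral_sub (hInt θ) (hInt _), integral_div,
    integral_mul_const] at hweak
  have herr : (∫ x, φ x) * ε / ((∫ x, φ x) + 1) ≤ ε := by
    rw [div_le_iff₀ (by positivity)]
    nlinarith
  simp only [mul_neg, integral_neg]
  have hflip : ((∫ x, φ x * W (θ - δ) x) - ∫ x, φ x * W θ x) / δ =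
      -(((∫ x, φ x * W θ x) - ∫ x, φ x * W (θ - δ) x) / δ) := by ring
  linarith

variable {v w : EuclideanSpace ℝ (Fin d) → ℝ}

theorem integrable_rpow_mul_neg_spaceLap (hm : 0 ≤ m) (hw : Continuous w) (hφ : ContDiff ℝ 2 φ)
    (hφc : HasCompactSupport φ) : Integrable fun x => w x ^ m * -spaceLap φ x :=
  Continuous.integrable_of_hasCompactSupport
    ((hw.rpow_const fun _ => .inr hm).mul (continuous_spaceLap hφ).neg)
    (HasCompactSupport.intro hφc.isCompact fun x hx => by
      simp [spaceLap_eq_zero_of_notMem_tsupport hx])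

theorem integral_rpow_mul_neg_spaceLap_le_add {k α : ℝ} (hm0 : 0 ≤ m) (hm1 : m ≤ 1)
    (hn : n * (1 - m) = 1) (hw : Continuous w) (hw0 : ∀ x, 0 ≤ w x)
    (hφ : ContDiff ℝ 2 φ) (hφc : HasCompactSupport φ) (hφ0 : ∀ x, 0 ≤ φ x) (hk : 0 ≤ k)
    (hφk : ∀ x, -(k * φ x ^ m) ≤ spaceLap φ x) (hα : 0 < α) :
    ∫ x, w x ^ m * -spaceLap φ x ≤
      α * (∫ x, φ x * w x) + k ^ n * α ^ (-(n * m)) * volume.real (tsupport φ) := by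
  have hpoint (x : EuclideanSpace ℝ (Fin d)) : w x ^ m * -spaceLap φ x ≤
      α * (φ x * w x) + (tsupport φ).indicator (fun _ => k ^ n * α ^ (-(n * m))) x := by
    by_cases hx : x ∈ tsupport φ
    · rw [indicator_of_mem hx]
      calc w x ^ m * -spaceLap φ x ≤ w x ^ m * (k * φ x ^ m) :=
            mul_le_mul_of_nonneg_left (neg_le.1 (hφk x)) (rpow_nonneg (hw0 x) m)
        _ = k * (φ x * w x) ^ m := by rw [mul_rpow (hφ0 x) (hw0 x)]; ring
        _ ≤ _ := mul_rpow_le_mul_add_rpow hm0 hm1 hn hk hα (mul_nonneg (hφ0 x) (hw0 x))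
    · simp [spaceLap_eq_zero_of_notMem_tsupport hx, image_eq_zero_of_notMem_tsupport hx,
        indicator_of_notMem hx]
  have hInt := (integrable_mul_of_hasCompactSupport hφ.continuous hφc hw).const_mul α
  have hind : Integrable ((tsupport φ).indicator fun _ => k ^ n * α ^ (-(n * m))) :=
    (integrable_indicator_iff (isClosed_tsupport φ).measurableSet).2
      (integrableOn_const hφc.isCompact.measure_lt_top.ne)
  refine (integral_mono (integrable_rpow_mul_neg_spaceLap hm0 hw hφ hφc) (hInt.add hind)
    hpoint).trans_eq ?_
  rw [integral_add' hInt hind, integral_const_mul,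
    integral_indicator (isClosed_tsupport φ).measurableSet, setIntegral_const, smul_eq_mul,
    mul_comm (volume.real _)]

theorem integral_rpow_mul_neg_spaceLap_le_mul {c : ℝ} (hm : 0 ≤ m) (hc : 0 ≤ c) (hv : Continuous v)
    (hw : Continuous w) (hv0 : ∀ x, 0 ≤ v x) (hw0 : ∀ x, 0 ≤ w x) (hwv : ∀ x, w x ≤ c * v x)
    (hφ : ContDiff ℝ 2 φ) (hφc : HasCompactSupport φ) :
    ∫ x, w x ^ m * -spaceLap φ x ≤ c ^ m * ∫ x, max (-spaceLap φ x) 0 * v x ^ m := by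
  have hLc : HasCompactSupport fun x => max (-spaceLap φ x) 0 :=
    hφc.mono' (subset_closure.trans (tsupport_max_neg_spaceLap_subset φ))
  have hInt : Integrable fun x => max (-spaceLap φ x) 0 * v x ^ m :=
    integrable_mul_of_hasCompactSupport ((continuous_spaceLap hφ).neg.max continuous_const) hLc
      (hv.rpow_const fun _ => .inr hm)
  rw [← integral_const_mul]
  refine integral_mono (integrable_rpow_mul_neg_spaceLap hm hw hφ hφc) (hInt.const_mul _)
    fun x => ?_
  calc w x ^ m * -spaceLap φ x ≤ w x ^ m * max (-spaceLap φ x) 0 :=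
        mul_le_mul_of_nonneg_left (le_max_left _ _) (rpow_nonneg (hw0 x) m)
    _ ≤ (c * v x) ^ m * max (-spaceLap φ x) 0 :=
        mul_le_mul_of_nonneg_right (rpow_le_rpow (hw0 x) (hwv x) hm) (le_max_right _ _)
    _ = c ^ m * (max (-spaceLap φ x) 0 * v x ^ m) := by rw [mul_rpow hc (hv0 x)]; ring

theorem IsDiscreteSupersol.herrero_pierre {k : ℝ} (hW : IsDiscreteSupersol m b t (tsupport φ) W)
    (hm0 : 0 ≤ m) (hm1 : m ≤ 1) (hn : n * (1 - m) = 1)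
    (hWc : Continuous fun p : ℝ × EuclideanSpace ℝ (Fin d) => W p.1 p.2)
    (hWpos : ∀ θ ∈ Icc b t, ∀ x, 0 ≤ W θ x) (hbt : b < t)
    (hφ : ContDiff ℝ 2 φ) (hφc : HasCompactSupport φ) (hφ0 : ∀ x, 0 ≤ φ x) (hk : 0 ≤ k)
    (hφk : ∀ x, -(k * φ x ^ m) ≤ spaceLap φ x) :
    ∫ x, φ x * W b x ≤ exp 1 * ((∫ x, φ x * W t x) +
      k ^ n * (t - b) ^ n * volume.real (tsupport φ)) := by
  have hpos : 0 < t - b := sub_pos.2 hbt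
  have hcont : ContinuousOn (fun s => ∫ x, φ x * W s x) (Icc b t) :=
    continuousOn_integral_mul isOpen_univ hφ.continuous hφc (subset_univ _) hWc.continuousOn
  have hgron := le_exp_one_mul_of_backward_slope_le hbt
    (A := k ^ n * (t - b)⁻¹ ^ (-(n * m)) * volume.real (tsupport φ)) (by positivity) hcont
    fun θ hθ ε hε => by
      filter_upwards [hW.eventually_slope_integral_le hm0 hWc hφ hφc hφ0 hθ hε] with δ hδ
      have hyoung := integral_rpow_mul_neg_spaceLap_le_add (w := W θ) hm0 hm1 hn
        (hWc.comp (Continuous.prodMk_right θ)) (hWpos θ ⟨hθ.1.le, hθ.2⟩) hφ hφc hφ0 hk hφk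
        (inv_pos.2 hpos)
      exact hδ.trans (add_le_add_left hyoung ε)
  have hpow : (t - b) ^ n = (t - b)⁻¹ ^ (-(n * m)) * (t - b) := by
    rw [inv_rpow hpos.le, rpow_neg hpos.le, inv_inv, ← rpow_add_one hpos.ne']
    congr 1
    linarith
  rw [hpow]
  exact hgron.trans_eq (by ring)

theorem IsDiscreteSupersol.integral_le_of_antitone (hW : IsDiscreteSupersol m t S (tsupport φ) W)
    (hm : 0 ≤ m) (hnm : n * m + 1 = n) (hn : 0 ≤ n) (ht : 0 < t) (htS : t ≤ S)
    (hWc : Continuous fun p : ℝ × EuclideanSpace ℝ (Fin d) => W p.1 p.2)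
    (hWpos : ∀ θ ∈ Icc t S, ∀ x, 0 ≤ W θ x)
    (hWanti : ∀ θ ∈ Icc t S, ∀ x, W θ x ≤ (θ / t) ^ n * W t x)
    (hφ : ContDiff ℝ 2 φ) (hφc : HasCompactSupport φ) (hφ0 : ∀ x, 0 ≤ φ x) :
    ∫ x, φ x * W t x ≤ (∫ x, φ x * W S x) +
      S ^ n * t ^ (-(n * m)) * ∫ x, max (-spaceLap φ x) 0 * W t x ^ m := by
  have hS : 0 < S := ht.trans_le htS
  have hWt := hWpos t ⟨le_rfl, htS⟩
  have hslice (θ : ℝ) : Continuous (W θ) := hWc.comp (Continuous.prodMk_right θ)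
  have hflux (θ : ℝ) (hθ : θ ∈ Icc t S) : ∫ x, W θ x ^ m * -spaceLap φ x ≤
      ((S / t) ^ n) ^ m * ∫ x, max (-spaceLap φ x) 0 * W t x ^ m := by
    refine integral_rpow_mul_neg_spaceLap_le_mul hm (by positivity) (hslice t) (hslice θ) hWt
      (hWpos θ hθ) (fun x => (hWanti θ hθ x).trans ?_) hφ hφc
    have hθ0 : 0 < θ := ht.trans_le hθ.1
    exact mul_le_mul_of_nonneg_right (by gcongr; exact hθ.2) (hWt x)
  have hcont : ContinuousOn (fun s => ∫ x, φ x * W s x) (Icc t S) :=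
    continuousOn_integral_mul isOpen_univ hφ.continuous hφc (subset_univ _) hWc.continuousOn
  have hgron := le_gronwallBound_of_backward_slope_le htS (α := 0) hcont fun θ hθ ε hε => by
    filter_upwards [hW.eventually_slope_integral_le hm hWc hφ hφc hφ0 hθ hε] with δ hδ
    rw [zero_mul, zero_add]
    exact hδ.trans (add_le_add_left (hflux θ ⟨hθ.1.le, hθ.2⟩) ε)
  rw [gronwallBound_K0] at hgron
  have hI : 0 ≤ ∫ x, max (-spaceLap φ x) 0 * W t x ^ m := integral_nonneg fun x =>
    mul_nonneg (le_max_right _ _) (rpow_nonneg (hWt x) m)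
  have hpow : S ^ n = S ^ (n * m) * S := by rw [← rpow_add_one hS.ne', hnm]
  have hcoef : ((S / t) ^ n) ^ m * (S - t) ≤ S ^ n * t ^ (-(n * m)) := by
    rw [← rpow_mul (by positivity), div_rpow hS.le ht.le, rpow_neg ht.le, hpow, div_eq_mul_inv,
      mul_right_comm (S ^ (n * m)) S]
    gcongr
    linarith
  refine hgron.trans (add_le_add_right ?_ _)
  rw [mul_right_comm]
  exact mul_le_mul_of_nonneg_right hcoef hI

end IntegralInequalities

section LocalEstimate

variable {d : ℕ} {m n : ℝ} {Q : Set (ℝ × EuclideanSpace ℝ (Fin d))}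
  {u : ℝ → EuclideanSpace ℝ (Fin d) → ℝ}

theorem exists_continuous_pos_eqOn {X : Type*} [TopologicalSpace X] [NormalSpace X] {f : X → ℝ}
    {s : Set X} (hs : IsClosed s) (hf : ContinuousOn f s) (hpos : ∀ x ∈ s, 0 < f x) :
    ∃ g : X → ℝ, Continuous g ∧ (∀ x, 0 < g x) ∧ EqOn g f s := by
  obtain ⟨g, hg, heq⟩ := ContinuousMap.exists_restrict_eq_forall_mem_of_closed
    ⟨s.domRestrict f, hf.domRestrict⟩ (t := Ioi 0) (fun x => hpos x x.2) nonempty_Ioi hs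
  exact ⟨g, g.continuous, hg, fun x hx => DFunLike.congr_fun heq ⟨x, hx⟩⟩

theorem IsDiscreteSupersol.mono {b b' S S' : ℝ} {K K' : Set (EuclideanSpace ℝ (Fin d))}
    {W : ℝ → EuclideanSpace ℝ (Fin d) → ℝ} (hW : IsDiscreteSupersol m b S K W) (hb : b ≤ b')
    (hS : S' ≤ S) (hK : K' ⊆ K) : IsDiscreteSupersol m b' S' K' W := by
  intro ε hε
  filter_upwards [hW ε hε] with δ hδ
  filter_upwards [hδ] with h hh θ hθ τ hτ hbτ x hx
  exact hh θ ⟨hb.trans hθ.1, hθ.2.trans hS⟩ τ hτ (hb.trans hbτ) x (hK hx)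

theorem IsDiscreteSupersol.integral_le {b t S k C : ℝ} {φ₀ φ : EuclideanSpace ℝ (Fin d) → ℝ}
    {W : ℝ → EuclideanSpace ℝ (Fin d) → ℝ}
    (hW : IsDiscreteSupersol m b S (tsupport φ₀ ∪ tsupport φ) W) (hm0 : 0 ≤ m) (hm1 : m < 1)
    (hn : n * (1 - m) = 1) (hb : 0 < b) (hbt : b < t) (htS : t ≤ S)
    (hWc : Continuous fun p : ℝ × EuclideanSpace ℝ (Fin d) => W p.1 p.2)
    (hWpos : ∀ θ > 0, ∀ x, 0 ≤ W θ x)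
    (hWanti : ∀ θ ∈ Icc t S, ∀ x, W θ x ≤ (θ / t) ^ n * W t x)
    (hφ₀ : ContDiff ℝ 2 φ₀) (hφ₀c : HasCompactSupport φ₀) (hφ₀0 : ∀ x, 0 ≤ φ₀ x)
    (hφ : ContDiff ℝ 2 φ) (hφc : HasCompactSupport φ) (hφ0 : ∀ x, 0 ≤ φ x) (hk : 0 ≤ k)
    (hφk : ∀ x, -(k * φ₀ x ^ m) ≤ spaceLap φ₀ x) (hC : 0 ≤ C) (hφC : ∀ x, φ₀ x ≤ C * φ x) :
    ∫ x, φ₀ x * W b x ≤ exp 1 * (C * ((∫ x, φ x * W S x) +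
      S ^ n * t ^ (-(n * m)) * ∫ x, max (-spaceLap φ x) 0 * W t x ^ m) +
      k ^ n * (t - b) ^ n * volume.real (tsupport φ₀)) := by
  have ht : 0 < t := hb.trans hbt
  have hWt : Continuous (W t) := hWc.comp (Continuous.prodMk_right t)
  have hearly := (hW.mono le_rfl htS subset_union_left).herrero_pierre hm0 hm1.le hn hWc
    (fun θ hθ => hWpos θ (hb.trans_le hθ.1)) hbt hφ₀ hφ₀c hφ₀0 hk hφk
  have hcompare : ∫ x, φ₀ x * W t x ≤ C * ∫ x, φ x * W t x := by
    rw [← integral_const_mul]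
    refine integral_mono (integrable_mul_of_hasCompactSupport hφ₀.continuous hφ₀c hWt)
      ((integrable_mul_of_hasCompactSupport hφ.continuous hφc hWt).const_mul C) fun x => ?_
    simpa only [mul_assoc] using mul_le_mul_of_nonneg_right (hφC x) (hWpos t ht x)
  have hlate := (hW.mono hbt.le le_rfl subset_union_right).integral_le_of_antitone hm0
    (by linarith) (by nlinarith) ht htS hWc (fun θ hθ => hWpos θ (ht.trans_le hθ.1)) hWanti
    hφ hφc hφ0
  refine hearly.trans ?_
  gcongr
  exact hcompare.trans (mul_le_mul_of_nonneg_left hlate hC)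

namespace IsFDESol

theorem continuousOn_slice (hu : IsFDESol m Q u) (t : ℝ) :
    ContinuousOn (u t) ((fun x => (t, x)) ⁻¹' Q) :=
  hu.2.1.continuousOn.comp (Continuous.prodMk_right t).continuousOn (mapsTo_preimage _ _)

theorem exists_isDiscreteSupersol_minorant (hu : IsFDESol m Q u) (hQ : IsOpen Q) (hm : 0 ≤ m)
    (hn : 0 ≤ n) (hnm : n * m + 1 = n) {b S : ℝ} (hb : 0 < b) (hbS : b ≤ S)
    {K : Set (EuclideanSpace ℝ (Fin d))} (hK : IsCompact K) (hKQ : Icc b S ×ˢ K ⊆ Q)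
    (hanti : ∀ x ∈ K, AntitoneOn (fun s => s ^ (-n) * u s x) (Icc b (min S (2 * b)))) :
    ∃ W : ℝ → EuclideanSpace ℝ (Fin d) → ℝ,
      (Continuous fun p : ℝ × EuclideanSpace ℝ (Fin d) => W p.1 p.2) ∧
      (∀ θ > 0, ∀ x, 0 < W θ x) ∧ IsDiscreteSupersol m b S K W ∧ (∀ x ∈ K, W b x = u b x) ∧
      (∀ θ ∈ Icc b S, ∀ x ∈ K, W θ x ≤ u θ x) ∧
      ∀ θ σ, b ≤ σ → σ ≤ θ → ∀ x, W θ x ≤ (θ / σ) ^ n * W σ x := by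
  obtain ⟨I, V, -, hV, hI, hKV, hIV⟩ := generalized_tube_lemma isCompact_Icc hK hQ hKQ
  obtain ⟨r, hr, hrV⟩ := hK.exists_cthickening_subset_open hV hKV
  have hsub : Icc b S ×ˢ cthickening r K ⊆ Q := (prod_mono hI hrV).trans hIV
  have hpos0 (p : ℝ × EuclideanSpace ℝ (Fin d)) (hp : p ∈ Icc b S ×ˢ cthickening r K) :
      0 < p.1 := hb.trans_le hp.1.1
  obtain ⟨g, hg, hgpos, hgeq⟩ := exists_continuous_pos_eqOn
    (f := fun p : ℝ × EuclideanSpace ℝ (Fin d) => p.1 ^ (-n) * u p.1 p.2)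
    (isClosed_Icc.prod (isClosed_cthickening (E := K) (δ := r)))
    ((continuousOn_fst.rpow_const fun p hp => .inl (hpos0 p hp).ne').mul
      (hu.2.1.continuousOn.mono hsub))
    fun p hp => mul_pos (rpow_pos_of_pos (hpos0 p hp) _) (hu.1 p (hsub hp))
  let G : ℝ → EuclideanSpace ℝ (Fin d) → ℝ := fun σ x => g (σ, x)
  have hG (x : EuclideanSpace ℝ (Fin d)) : Continuous fun σ => G σ x :=
    hg.comp (Continuous.prodMk_left x)
  have hGu (σ : ℝ) (hσ : σ ∈ Icc b S) (x : EuclideanSpace ℝ (Fin d)) (hx : x ∈ cthickening r K) :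
      σ ^ n * G σ x = u σ x := by
    have hσ0 : 0 < σ := hb.trans_le hσ.1
    rw [show G σ x = σ ^ (-n) * u σ x from hgeq ⟨hσ, hx⟩, ← mul_assoc, ← rpow_add hσ0,
      add_neg_cancel, rpow_zero, one_mul]
  have hKr : K ⊆ cthickening r K := self_subset_cthickening K
  refine ⟨envelope n b G, continuous_envelope hn hg,
    fun θ hθ => envelope_pos hG (fun _ _ => hgpos _) hθ,
    isDiscreteSupersol_envelope hm hn hnm hG (fun _ _ => hgpos _) hb hbS (fun x hx => ?_)
      ((hu.isDiscreteSupersol hQ hK hKQ).congr hr hGu),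
    fun x hx => (envelope_self n b G x).trans (hGu b (left_mem_Icc.2 hbS) x (hKr hx)),
    fun θ hθ x hx => (envelope_le hG (hb.trans_le hθ.1).le hθ.1 x).trans_eq (hGu θ hθ x (hKr hx)),
    fun θ σ hσ hσθ => envelope_le_div_rpow_mul hG hb hσ hσθ⟩
  refine (hanti x hx).congr fun σ hσ => ?_
  have hmem : (σ, x) ∈ Icc b S ×ˢ cthickening r K :=
    ⟨⟨hσ.1, hσ.2.trans (min_le_left _ _)⟩, hKr hx⟩
  exact (hgeq hmem).symm

theorem exists_antitoneOn_comp_add (hu : IsFDESol m Q u) (hQ : IsOpen Q) (hn : 1 ≤ n) {a S : ℝ}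
    (ha : 0 < a) {K : Set (EuclideanSpace ℝ (Fin d))} (hK : IsCompact K)
    (hKQ : Icc a S ×ˢ K ⊆ Q) :
    ∃ b ∈ Ioc 0 a, ∀ x ∈ K,
      AntitoneOn (fun s => s ^ (-n) * u (s + (a - b)) x) (Icc b (min (S - (a - b)) (2 * b))) := by
  obtain ⟨L, hL, hlip⟩ := hu.exists_time_upper_lipschitz hQ hK hKQ
  obtain ⟨c, hc, hcu⟩ := hu.exists_pos_le (isCompact_Icc.prod hK) hKQ
  have hb : 0 < min a (c / (2 * L)) := by positivity
  refine ⟨min a (c / (2 * L)), ⟨hb, min_le_left _ _⟩, fun x hx => ?_⟩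
  generalize hbdef : min a (c / (2 * L)) = b at hb ⊢
  have hbL : b * (2 * L) ≤ c := by
    rw [← le_div_iff₀ (by positivity), ← hbdef]
    exact min_le_right _ _
  have hmem (s : ℝ) (hs : s ∈ Icc b (min (S - (a - b)) (2 * b))) :
      s + (a - b) ∈ Icc a S ∧ s ≤ 2 * b := by
    have := le_min_iff.1 hs.2
    exact ⟨⟨by linarith [hs.1], by linarith⟩, this.2⟩
  refine antitoneOn_rpow_neg_mul hn hL.le (fun s hs => hb.trans_le hs.1) (fun s hs => ?_)
    fun s hs s' hs' hle => ?_
  · calc s * L ≤ 2 * b * L := by gcongr; exact (hmem s hs).2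
      _ ≤ c := by linarith
      _ ≤ u (s + (a - b)) x := hcu (s + (a - b), x) ⟨(hmem s hs).1, hx⟩
  · refine (hlip x hx _ _ (hmem s hs).1.1 (by linarith) (hmem s' hs').1.2).trans_eq ?_
    ring

section TestFunctions

variable {φ₀ φ : EuclideanSpace ℝ (Fin d) → ℝ} {k C : ℝ}

theorem integral_le_of_antitoneOn (hu : IsFDESol m Q u) (hQ : IsOpen Q) (hm0 : 0 ≤ m) (hm1 : m < 1)
    (hn : n * (1 - m) = 1) {b t S : ℝ} (hb : 0 < b) (hbt : b < t) (htS : t ≤ S)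
    (hφ₀ : ContDiff ℝ 2 φ₀) (hφ₀c : HasCompactSupport φ₀) (hφ₀0 : ∀ x, 0 ≤ φ₀ x)
    (hφ : ContDiff ℝ 2 φ) (hφc : HasCompactSupport φ) (hφ0 : ∀ x, 0 ≤ φ x) (hk : 0 ≤ k)
    (hφk : ∀ x, -(k * φ₀ x ^ m) ≤ spaceLap φ₀ x) (hC : 0 ≤ C) (hφC : ∀ x, φ₀ x ≤ C * φ x)
    (hsub : Icc b S ×ˢ (tsupport φ₀ ∪ tsupport φ) ⊆ Q)
    (hanti : ∀ x ∈ tsupport φ₀ ∪ tsupport φ,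
      AntitoneOn (fun s => s ^ (-n) * u s x) (Icc b (min S (2 * b)))) :
    ∫ x, φ₀ x * u b x ≤ exp 1 * (C * ((∫ x, φ x * u S x) +
      S ^ n * t ^ (-(n * m)) * ∫ x, max (-spaceLap φ x) 0 * u t x ^ m) +
      k ^ n * (t - b) ^ n * volume.real (tsupport φ₀)) := by
  have ht : 0 < t := hb.trans hbt
  have hS : 0 < S := ht.trans_le htS
  have htmem : t ∈ Icc b S := ⟨hbt.le, htS⟩
  have hSmem : S ∈ Icc b S := ⟨hbt.le.trans htS, le_rfl⟩
  obtain ⟨W, hWc, hWpos, hW, hWb, hWu, hWanti⟩ := hu.exists_isDiscreteSupersol_minorant hQ hm0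
    (by nlinarith) (by linarith) hb hSmem.1 (hφ₀c.isCompact.union hφc.isCompact) hsub hanti
  have hinit : ∫ x, φ₀ x * u b x = ∫ x, φ₀ x * W b x := by
    refine integral_congr_ae (.of_forall fun x => ?_)
    by_cases hx : x ∈ tsupport φ₀
    · simp only [hWb x (.inl hx)]
    · simp only [image_eq_zero_of_notMem_tsupport hx, zero_mul]
  have hfinal : ∫ x, φ x * W S x ≤ ∫ x, φ x * u S x :=
    integral_mul_le_integral_mul_of_tsupport_subset (hQ.preimage (Continuous.prodMk_right S))
      hφ.continuous hφc hφ0 (fun x hx => hsub ⟨hSmem, .inr hx⟩) (hu.continuousOn_slice S)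
      (fun x => (hWpos S hS x).le) fun x hx => hWu S hSmem x (.inr hx)
  have hflux : ∫ x, max (-spaceLap φ x) 0 * W t x ^ m ≤
      ∫ x, max (-spaceLap φ x) 0 * u t x ^ m := by
    have hψφ := tsupport_max_neg_spaceLap_subset φ
    exact integral_mul_le_integral_mul_of_tsupport_subset
      (hQ.preimage (Continuous.prodMk_right t)) ((continuous_spaceLap hφ).neg.max continuous_const)
      (hφc.mono' (subset_closure.trans hψφ)) (fun _ => le_max_right _ _)
      (fun x hx => hsub ⟨htmem, .inr (hψφ hx)⟩)
      ((hu.continuousOn_slice t).rpow_const fun _ _ => .inr hm0)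
      (fun x => rpow_nonneg (hWpos t ht x).le m)
      fun x hx => rpow_le_rpow (hWpos t ht x).le (hWu t htmem x (.inr (hψφ hx))) hm0
  rw [hinit]
  refine (hW.integral_le hm0 hm1 hn hb hbt htS hWc (fun θ hθ x => (hWpos θ hθ x).le)
    (fun θ hθ => hWanti θ t hbt.le hθ.1) hφ₀ hφ₀c hφ₀0 hφ hφc hφ0 hk hφk hC hφC).trans ?_
  gcongr

-- Translating time to a small initial time `b` makes `s ^ (-n) * u s x` nonincreasing near `b`.
theorem integral_le (hu : IsFDESol m Q u) (hQ : IsOpen Q) (hm0 : 0 ≤ m) (hm1 : m < 1)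
    (hn : n * (1 - m) = 1) {a t S : ℝ} (ha : 0 < a) (hat : a < t) (htS : t ≤ S)
    (hφ₀ : ContDiff ℝ 2 φ₀) (hφ₀c : HasCompactSupport φ₀) (hφ₀0 : ∀ x, 0 ≤ φ₀ x)
    (hφ : ContDiff ℝ 2 φ) (hφc : HasCompactSupport φ) (hφ0 : ∀ x, 0 ≤ φ x) (hk : 0 ≤ k)
    (hφk : ∀ x, -(k * φ₀ x ^ m) ≤ spaceLap φ₀ x) (hC : 0 ≤ C) (hφC : ∀ x, φ₀ x ≤ C * φ x)
    (hsub : Icc a S ×ˢ (tsupport φ₀ ∪ tsupport φ) ⊆ Q) :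
    ∫ x, φ₀ x * u a x ≤ exp 1 * (C * ((∫ x, φ x * u S x) +
      S ^ n * (t - a) ^ (-(n * m)) * ∫ x, max (-spaceLap φ x) 0 * u t x ^ m) +
      k ^ n * (t - a) ^ n * volume.real (tsupport φ₀)) := by
  have hn0 : 0 ≤ n := by nlinarith
  have hnm : 0 ≤ n * m := mul_nonneg hn0 hm0
  obtain ⟨b, hb, hanti⟩ := hu.exists_antitoneOn_comp_add hQ (n := n) (by linarith) ha
    (hφ₀c.isCompact.union hφc.isCompact) hsub
  have hshift := (hu.comp_add_time (a - b)).integral_le_of_antitoneOn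
    (hQ.preimage (by fun_prop)) hm0 hm1 hn hb.1 (t := t - (a - b)) (S := S - (a - b))
    (by linarith) (by linarith) hφ₀ hφ₀c hφ₀0 hφ hφc hφ0 hk hφk hC hφC
    (fun p hp => hsub ⟨⟨by linarith [hp.1.1], by linarith [hp.1.2]⟩, hp.2⟩) hanti
  simp only [add_sub_cancel, sub_add_cancel] at hshift
  rw [show t - (a - b) - b = t - a by ring] at hshift
  have hflux : 0 ≤ ∫ x, max (-spaceLap φ x) 0 * u t x ^ m := by
    refine integral_nonneg fun x => ?_
    by_cases hx : x ∈ tsupport φ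
    · exact mul_nonneg (le_max_right _ _)
        (rpow_nonneg (hu.1 (t, x) (hsub ⟨⟨hat.le, htS⟩, .inr hx⟩)).le m)
    · simp [spaceLap_eq_zero_of_notMem_tsupport hx]
  have hcoef : (S - (a - b)) ^ n * (t - (a - b)) ^ (-(n * m)) ≤ S ^ n * (t - a) ^ (-(n * m)) :=
    mul_le_mul (rpow_le_rpow (by linarith [hb.1]) (by linarith [hb.2]) hn0)
      (rpow_le_rpow_of_nonpos (sub_pos.2 hat) (by linarith [hb.1]) (by linarith))
      (rpow_nonneg (by linarith [hb.1]) _) (rpow_nonneg (by linarith) _)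
  refine hshift.trans ?_
  gcongr

end TestFunctions

end IsFDESol

end LocalEstimate

section LimitEstimate

variable {d : ℕ} {m n k C t T : ℝ} {Ω : Set (EuclideanSpace ℝ (Fin d))}
  {u : ℝ → EuclideanSpace ℝ (Fin d) → ℝ} {u₀ φ₀ φ : EuclideanSpace ℝ (Fin d) → ℝ}

theorem ExtinctAt.tendsto_integral_mul (hext : ExtinctAt T Ω u) (hΩ : IsOpen Ω) (ht : 0 < t)
    (htT : t < T) (hφ : Continuous φ) (hφc : HasCompactSupport φ) (hφΩ : tsupport φ ⊆ Ω) :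
    Tendsto (fun S => ∫ x, φ x * u S x) (𝓝[Ioo t T] T) (𝓝 0) := by
  have hzero : ∫ x, φ x * u T x = 0 := by
    refine integral_eq_zero_of_ae (.of_forall fun x => ?_)
    by_cases hx : x ∈ tsupport φ
    · simp [hext.2.1 x (hφΩ hx)]
    · simp [image_eq_zero_of_notMem_tsupport hx]
  have hcont := continuousOn_integral_mul hΩ hφ hφc hφΩ hext.1 T ⟨ht.trans htT, le_rfl⟩
  rw [ContinuousWithinAt, hzero] at hcont
  exact hcont.mono_left (nhdsWithin_mono T fun S hS => ⟨ht.trans hS.1, hS.2.le⟩)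

theorem TakesInit.tendsto_integral_mul (hinit : TakesInit T Ω u u₀) (hΩ : IsOpen Ω) (ht : 0 < t)
    (htT : t < T) (hφ : Continuous φ) (hφc : HasCompactSupport φ) (hφΩ : tsupport φ ⊆ Ω) :
    Tendsto (fun a => ∫ x, φ x * u a x) (𝓝[Ioo 0 t] 0) (𝓝 (∫ x, φ x * u₀ x)) := by
  have hzero : ∫ x, φ x * u 0 x = ∫ x, φ x * u₀ x := by
    refine integral_congr_ae (.of_forall fun x => ?_)
    by_cases hx : x ∈ tsupport φ
    · simp only [hinit.2 x (hφΩ hx)]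
    · simp only [image_eq_zero_of_notMem_tsupport hx, zero_mul]
  have hcont := continuousOn_integral_mul hΩ hφ hφc hφΩ hinit.1 0 ⟨le_rfl, ht.trans htT⟩
  rw [ContinuousWithinAt, hzero] at hcont
  exact hcont.mono_left (nhdsWithin_mono 0 fun a ha => ⟨ha.1.le, ha.2.trans htT⟩)

theorem IsFDESol.integral_init_le (hu : IsFDESol m (Ioo 0 T ×ˢ Ω) u) (hΩ : IsOpen Ω)
    (hinit : TakesInit T Ω u u₀) (hext : ExtinctAt T Ω u) (hm0 : 0 ≤ m) (hm1 : m < 1)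
    (hn : n * (1 - m) = 1) (ht : 0 < t) (htT : t < T)
    (hφ₀ : ContDiff ℝ 2 φ₀) (hφ₀c : HasCompactSupport φ₀) (hφ₀0 : ∀ x, 0 ≤ φ₀ x)
    (hφ₀Ω : tsupport φ₀ ⊆ Ω) (hφ : ContDiff ℝ 2 φ) (hφc : HasCompactSupport φ)
    (hφ0 : ∀ x, 0 ≤ φ x) (hφΩ : tsupport φ ⊆ Ω) (hk : 0 ≤ k)
    (hφk : ∀ x, -(k * φ₀ x ^ m) ≤ spaceLap φ₀ x) (hC : 0 ≤ C) (hφC : ∀ x, φ₀ x ≤ C * φ x) :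
    ∫ x, φ₀ x * u₀ x ≤ exp 1 * (C * (T ^ n * t ^ (-(n * m)) *
      ∫ x, max (-spaceLap φ x) 0 * u t x ^ m) + k ^ n * t ^ n * volume.real (tsupport φ₀)) := by
  have hn0 : 0 ≤ n := by nlinarith
  have : (𝓝[Ioo t T] T).NeBot := right_nhdsWithin_Ioo_neBot htT
  have : (𝓝[Ioo 0 t] (0 : ℝ)).NeBot := left_nhdsWithin_Ioo_neBot ht
  set F := ∫ x, max (-spaceLap φ x) 0 * u t x ^ m
  set V := volume.real (tsupport φ₀)
  have hextinct (a : ℝ) (ha : a ∈ Ioo 0 t) : ∫ x, φ₀ x * u a x ≤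
      exp 1 * (C * (0 + T ^ n * (t - a) ^ (-(n * m)) * F) + k ^ n * (t - a) ^ n * V) := by
    have hpow : Tendsto (fun S : ℝ => S ^ n) (𝓝[Ioo t T] T) (𝓝 (T ^ n)) :=
      (continuousAt_rpow_const T n (.inr hn0)).mono_left nhdsWithin_le_nhds
    refine ge_of_tendsto (((((hext.tendsto_integral_mul hΩ ht htT hφ.continuous hφc hφΩ).add
      ((hpow.mul_const _).mul_const F)).const_mul C).add_const _).const_mul (exp 1)) ?_
    filter_upwards [self_mem_nhdsWithin] with S hS
    exact hu.integral_le (isOpen_Ioo.prod hΩ) hm0 hm1 hn ha.1 ha.2 hS.1.le hφ₀ hφ₀c hφ₀0 hφ hφc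
      hφ0 hk hφk hC hφC (prod_mono (fun s hs => ⟨ha.1.trans_le hs.1, hs.2.trans_lt hS.2⟩)
        (union_subset hφ₀Ω hφΩ))
  have hpow (r : ℝ) : Tendsto (fun a => (t - a) ^ r) (𝓝[Ioo 0 t] 0) (𝓝 (t ^ r)) := by
    have hcont : ContinuousAt (fun a => (t - a) ^ r) 0 :=
      ContinuousAt.rpow_const (by fun_prop) (.inl (by simpa using ht.ne'))
    simpa using hcont.tendsto.mono_left nhdsWithin_le_nhds
  simp only [zero_add] at hextinct
  exact le_of_tendsto_of_tendsto (hinit.tendsto_integral_mul hΩ ht htT hφ₀.continuous hφ₀c hφ₀Ω)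
    ((((((hpow _).const_mul _).mul_const F).const_mul C).add
      (((hpow n).const_mul _).mul_const V)).const_mul (exp 1))
    (eventually_nhdsWithin_of_forall hextinct)

end LimitEstimate

/-- The radial function about `x₀` whose profile `G` is read in the variable `‖x - x₀‖ ^ 2 / R ^ 2`;
the square makes it smooth at `x₀` as soon as `G` is smooth at `0`. -/
noncomputable def radial {d : ℕ} (x₀ : EuclideanSpace ℝ (Fin d)) (R : ℝ) (G : ℝ → ℝ)
    (x : EuclideanSpace ℝ (Fin d)) : ℝ :=
  G (‖x - x₀‖ ^ 2 / R ^ 2)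

/-- The `d`-dimensional Laplacian of a radial function, as an operator on its profile in the
variable `r = ‖x‖ ^ 2`. -/
noncomputable def radialLap (d : ℕ) (G : ℝ → ℝ) (r : ℝ) : ℝ :=
  2 * d * deriv G r + 4 * r * deriv (deriv G) r

section Radial

variable {d : ℕ} {x₀ x : EuclideanSpace ℝ (Fin d)} {R a : ℝ} {G : ℝ → ℝ}

theorem contDiff_radial {k : WithTop ℕ∞} (hG : ∀ r, 0 ≤ r → ContDiffAt ℝ k G r) :
    ContDiff ℝ k (radial x₀ R G) :=
  contDiff_iff_contDiffAt.2 fun x => (hG _ (by positivity)).comp x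
    (((contDiffAt_id.sub contDiffAt_const).norm_sq ℝ).div_const _)

theorem hasFDerivAt_normSq_div (x₀ x : EuclideanSpace ℝ (Fin d)) (R : ℝ) :
    HasFDerivAt (fun y => ‖y - x₀‖ ^ 2 / R ^ 2) ((2 / R ^ 2) • innerSL ℝ (x - x₀)) x := by
  simp only [div_eq_mul_inv]
  refine ((hasFDerivAt_id x).sub_const x₀ |>.norm_sq.mul_const (R ^ 2)⁻¹).congr_fderiv ?_
  ext y
  simp
  ring

theorem hasFDerivAt_radial (hG : DifferentiableAt ℝ G (‖x - x₀‖ ^ 2 / R ^ 2)) :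
    HasFDerivAt (radial x₀ R G)
      (deriv G (‖x - x₀‖ ^ 2 / R ^ 2) • (2 / R ^ 2) • innerSL ℝ (x - x₀)) x :=
  hG.hasDerivAt.comp_hasFDerivAt x (hasFDerivAt_normSq_div x₀ x R)

theorem fderiv_radial_single (hG : DifferentiableAt ℝ G (‖x - x₀‖ ^ 2 / R ^ 2)) (i : Fin d) :
    fderiv ℝ (radial x₀ R G) x (EuclideanSpace.single i 1) =
      radial x₀ R (deriv G) x * (2 / R ^ 2 * (x i - x₀ i)) := by
  simp [(hasFDerivAt_radial hG).fderiv, radial, EuclideanSpace.inner_single_right]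

theorem second_fderiv_radial_single (hG : ContDiffAt ℝ 2 G (‖x - x₀‖ ^ 2 / R ^ 2)) (i : Fin d) :
    fderiv ℝ (fun y => fderiv ℝ (radial x₀ R G) y (EuclideanSpace.single i 1)) x
        (EuclideanSpace.single i 1) =
      2 / R ^ 2 * deriv G (‖x - x₀‖ ^ 2 / R ^ 2) +
        4 / R ^ 4 * deriv (deriv G) (‖x - x₀‖ ^ 2 / R ^ 2) * (x i - x₀ i) ^ 2 := by
  have hnear : (fun y => fderiv ℝ (radial x₀ R G) y (EuclideanSpace.single i 1)) =ᶠ[𝓝 x]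
      fun y => radial x₀ R (deriv G) y * (2 / R ^ 2 * (y i - x₀ i)) := by
    filter_upwards [(hasFDerivAt_normSq_div x₀ x R).continuousAt.eventually
      (hG.eventually (by simp))] with y hy
    exact fderiv_radial_single (hy.differentiableAt (by simp)) i
  have hcoord : HasFDerivAt (fun y : EuclideanSpace ℝ (Fin d) => 2 / R ^ 2 * (y i - x₀ i))
      ((2 / R ^ 2) • EuclideanSpace.proj i) x :=
    ((EuclideanSpace.proj (𝕜 := ℝ) i).hasFDerivAt.sub_const (x₀ i)).const_mul (2 / R ^ 2)
  have hderiv : DifferentiableAt ℝ (deriv G) (‖x - x₀‖ ^ 2 / R ^ 2) :=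
    (hG.derivWithin (m := 1) (by norm_num)).differentiableAt (by simp)
  have hrad := hasFDerivAt_radial hderiv
  rw [hnear.fderiv_eq, (hrad.fun_mul hcoord).fderiv]
  simp [radial, EuclideanSpace.inner_single_right]
  ring

theorem spaceLap_radial (hG : ContDiffAt ℝ 2 G (‖x - x₀‖ ^ 2 / R ^ 2)) :
    spaceLap (radial x₀ R G) x = radialLap d G (‖x - x₀‖ ^ 2 / R ^ 2) / R ^ 2 := by
  have hnorm : ‖x - x₀‖ ^ 2 = ∑ i, (x i - x₀ i) ^ 2 := by simp [EuclideanSpace.norm_sq_eq]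
  simp only [spaceLap, second_fderiv_radial_single hG, Finset.sum_add_distrib, Finset.sum_const,
    Finset.card_univ, Fintype.card_fin, nsmul_eq_mul, ← Finset.mul_sum, ← hnorm, radialLap]
  ring

theorem tsupport_radial_subset (ha : 0 ≤ a) (hR : 0 < R) (hG : ∀ r, a ^ 2 ≤ r → G r = 0) :
    tsupport (radial x₀ R G) ⊆ closedBall x₀ (a * R) := by
  refine closure_minimal (fun x hx => ?_) isClosed_closedBall
  rw [mem_closedBall, dist_eq_norm]
  by_contra! hlt
  refine hx (hG _ ?_)
  rw [le_div_iff₀ (by positivity), ← mul_pow]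
  gcongr

end Radial

section Cutoff

variable {d : ℕ} {m a : ℝ} {q : ℝ → ℝ}

theorem radialLap_pow (hq : ContDiff ℝ 2 q) (p : ℕ) (r : ℝ) :
    radialLap d (fun s => q s ^ (p + 2)) r = (p + 2) * q r ^ (p + 1) * radialLap d q r +
      4 * r * ((p + 2) * (p + 1) * q r ^ p * deriv q r ^ 2) := by
  have hq1 (s : ℝ) : HasDerivAt q (deriv q s) s :=
    (hq.differentiable (by simp) s).hasDerivAt
  have hq2 : HasDerivAt (deriv q) (deriv (deriv q) r) r :=
    (hq.differentiable_deriv_two r).hasDerivAt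
  have hpow : deriv (fun s => q s ^ (p + 2)) = fun s => (p + 2) * q s ^ (p + 1) * deriv q s := by
    ext s
    simpa using ((hq1 s).fun_pow (p + 2)).deriv
  have hpow' := (((hq1 r).fun_pow (p + 1)).const_mul ((p : ℝ) + 2)).fun_mul hq2
  simp only [radialLap, hpow, hpow'.deriv, add_tsub_cancel_right]
  push_cast
  ring

theorem exists_neg_le_radialLap_pow (d : ℕ) (hq : ContDiff ℝ 2 q) (hq0 : ∀ r, 0 ≤ q r)
    (hq1 : ∀ r, q r ≤ 1) (hqa : ∀ r, a ≤ r → q r = 0) {p : ℕ} (hp : (p + 2) * m ≤ p + 1) :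
    ∃ k > 0, ∀ r, 0 ≤ r →
      -(k * (q r ^ (p + 2)) ^ m) ≤ radialLap d (fun s => q s ^ (p + 2)) r := by
  have hcont : Continuous (radialLap d q) := by
    unfold radialLap
    have := hq.continuous_deriv (by simp)
    have := (hq.deriv' (n := 1)).continuous_deriv le_rfl
    fun_prop
  obtain ⟨M, hM⟩ := (isCompact_Icc (a := (0 : ℝ)) (b := a)).exists_bound_of_continuousOn
    hcont.continuousOn
  refine ⟨(p + 2) * (|M| + 1), by positivity, fun r hr => ?_⟩
  have hqr := hq0 r
  have hpow : q r ^ (p + 1) ≤ (q r ^ (p + 2)) ^ m := by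
    rcases hqr.eq_or_lt with hzero | hpos
    · simpa [← hzero] using zero_rpow_nonneg m
    · rw [← rpow_natCast, ← rpow_natCast, ← rpow_mul hqr]
      exact rpow_le_rpow_of_exponent_ge hpos (hq1 r) (by push_cast; linarith)
  have hlap : -(|M| + 1) * q r ^ (p + 1) ≤ radialLap d q r * q r ^ (p + 1) := by
    rcases le_total a r with har | hra
    · simp [hqa r har]
    · gcongr
      linarith [neg_le_of_abs_le (hM r ⟨hr, hra⟩), le_abs_self M]
  have hsquare : 0 ≤ 4 * r * ((p + 2) * (p + 1) * q r ^ p * deriv q r ^ 2) := by positivity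
  rw [radialLap_pow hq]
  calc -((p + 2) * (|M| + 1) * (q r ^ (p + 2)) ^ m)
      ≤ -((p + 2) * (|M| + 1) * q r ^ (p + 1)) := by gcongr
    _ = (p + 2) * (-(|M| + 1) * q r ^ (p + 1)) := by ring
    _ ≤ (p + 2) * (radialLap d q r * q r ^ (p + 1)) := by gcongr
    _ ≤ _ := by linarith

-- A high power of a cutoff: differentiating twice costs only a factor `φ ^ m`.
theorem exists_cutoff_neg_le_spaceLap (d : ℕ) (hm : m < 1) :
    ∃ k > 0, ∀ (x₀ : EuclideanSpace ℝ (Fin d)) (R : ℝ), 0 < R →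
      ∃ φ : EuclideanSpace ℝ (Fin d) → ℝ, ContDiff ℝ 2 φ ∧ (∀ x, 0 ≤ φ x) ∧ (∀ x, φ x ≤ 1) ∧
        (∀ x ∈ ball x₀ R, φ x = 1) ∧ tsupport φ ⊆ closedBall x₀ (2 * R) ∧
        ∀ x, -(k / R ^ 2 * φ x ^ m) ≤ spaceLap φ x := by
  set q : ℝ → ℝ := fun r => smoothTransition ((4 - r) / 3)
  have hq : ContDiff ℝ 2 q := smoothTransition.contDiff.comp (by fun_prop)
  obtain ⟨p, hp⟩ := exists_nat_ge (1 / (1 - m))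
  rw [div_le_iff₀ (by linarith)] at hp
  have hzero (r : ℝ) (hr : 4 ≤ r) : q r = 0 := smoothTransition.zero_of_nonpos (by linarith)
  obtain ⟨k, hk, hlap⟩ := exists_neg_le_radialLap_pow (m := m) d hq
    (fun r => smoothTransition.nonneg _) (fun r => smoothTransition.le_one _) hzero (p := p)
    (by linarith)
  have hG : ContDiff ℝ 2 fun s => q s ^ (p + 2) := hq.pow _
  refine ⟨k, hk, fun x₀ R hR => ⟨radial x₀ R fun s => q s ^ (p + 2),
    contDiff_radial fun r _ => hG.contDiffAt, fun x => pow_nonneg (smoothTransition.nonneg _) _,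
    fun x => pow_le_one₀ (smoothTransition.nonneg _) (smoothTransition.le_one _), fun x hx => ?_,
    tsupport_radial_subset zero_le_two hR fun r hr => by simp [hzero r (by linarith)],
    fun x => ?_⟩⟩
  · have hx1 : ‖x - x₀‖ ^ 2 / R ^ 2 ≤ 1 := by
      rw [div_le_one (by positivity)]
      gcongr
      exact (mem_ball_iff_norm.1 hx).le
    simp [radial, q, smoothTransition.one_of_one_le (show 1 ≤ (4 - ‖x - x₀‖ ^ 2 / R ^ 2) / 3 by
      linarith)]
  · rw [spaceLap_radial hG.contDiffAt, div_mul_eq_mul_div, ← neg_div]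
    gcongr
    exact hlap _ (by positivity)

end Cutoff

/-- The truncated radial flux of the regularised Green function: `ρ` regularises the singularity
and the smooth cutoff vanishes for `6 ≤ s`. -/
noncomputable def greenFlux (d : ℕ) (ρ s : ℝ) : ℝ :=
  (s + ρ ^ 2) ^ (-(d : ℝ) / 2) / 2 * smoothTransition (6 - s)

/-- The profile, in the variable `r = ‖x‖ ^ 2`, of a regularised Green function truncated so as to
have compact support. -/
noncomputable def greenProfile (d : ℕ) (ρ r : ℝ) : ℝ :=
  ∫ s in r..6, greenFlux d ρ s

section GreenFunction

variable {d : ℕ} {ρ r s : ℝ}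

theorem greenFlux_eq_zero (hs : 6 ≤ s) : greenFlux d ρ s = 0 := by
  simp [greenFlux, smoothTransition.zero_of_nonpos (sub_nonpos.2 hs)]

theorem greenFlux_nonneg (hs : 0 ≤ s) : 0 ≤ greenFlux d ρ s := by
  have := smoothTransition.nonneg (6 - s)
  unfold greenFlux
  positivity

theorem le_greenFlux (hρ1 : ρ ^ 2 ≤ 1) (hs : s ∈ Ioc 0 5) :
    6 ^ (-(d : ℝ) / 2) / 2 ≤ greenFlux d ρ s := by
  rw [greenFlux, smoothTransition.one_of_one_le (by linarith [hs.2]), mul_one]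
  gcongr ?_ / 2
  exact rpow_le_rpow_of_nonpos (by linarith [hs.1, sq_nonneg ρ]) (by linarith [hs.2])
    (div_nonpos_of_nonpos_of_nonneg (by simp) zero_le_two)

theorem contDiffOn_greenFlux : ContDiffOn ℝ 1 (greenFlux d ρ) (Ioi (-ρ ^ 2)) := by
  refine ContDiffOn.mul ?_ (smoothTransition.contDiff.comp (by fun_prop)).contDiffOn
  refine (ContDiffOn.rpow_const_of_ne (by fun_prop) fun s hs => ?_).div_const 2
  exact (neg_lt_iff_pos_add.1 hs).ne'

theorem intervalIntegrable_greenFlux (hρ : ρ ≠ 0) (hr : 0 ≤ r) (hs : 0 ≤ s) :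
    IntervalIntegrable (greenFlux d ρ) volume r s := by
  refine (contDiffOn_greenFlux.continuousOn.mono fun σ hσ => ?_).intervalIntegrable
  have : 0 < ρ ^ 2 := by positivity
  exact (neg_lt_zero.2 this).trans_le ((le_min hr hs).trans hσ.1)

theorem hasDerivAt_greenProfile (hr : r ∈ Ioi (-ρ ^ 2)) :
    HasDerivAt (greenProfile d ρ) (-greenFlux d ρ r) r := by
  have hcont := (contDiffOn_greenFlux (d := d) (ρ := ρ)).continuousOn
  refine intervalIntegral.integral_hasDerivAt_left
    (hcont.mono fun σ hσ => lt_of_lt_of_le ?_ hσ.1).intervalIntegrable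
    (hcont.stronglyMeasurableAtFilter isOpen_Ioi r hr) (hcont.continuousAt (Ioi_mem_nhds hr))
  exact lt_min hr (by nlinarith [sq_nonneg ρ])

theorem deriv_greenProfile_eqOn :
    EqOn (deriv (greenProfile d ρ)) (-greenFlux d ρ) (Ioi (-ρ ^ 2)) :=
  fun _ hr => (hasDerivAt_greenProfile hr).deriv

theorem contDiffAt_greenProfile (hr : r ∈ Ioi (-ρ ^ 2)) :
    ContDiffAt ℝ 2 (greenProfile d ρ) r := by
  refine ContDiffOn.contDiffAt ?_ (Ioi_mem_nhds hr)
  refine (contDiffOn_succ_iff_deriv_of_isOpen (n := 1) isOpen_Ioi).2 ⟨fun s hs =>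
    (hasDerivAt_greenProfile hs).differentiableAt.differentiableWithinAt, by simp,
    contDiffOn_greenFlux.neg.congr deriv_greenProfile_eqOn⟩

theorem greenProfile_eq_zero (hr : 6 ≤ r) : greenProfile d ρ r = 0 := by
  refine intervalIntegral.integral_zero_ae (.of_forall fun s hs => greenFlux_eq_zero ?_)
  rw [uIoc_of_ge hr] at hs
  exact hs.1.le

theorem greenProfile_nonneg (hr : 0 ≤ r) : 0 ≤ greenProfile d ρ r := by
  rcases le_total r 6 with h | h
  · exact intervalIntegral.integral_nonneg h fun s hs => greenFlux_nonneg (hr.trans hs.1)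
  · exact (greenProfile_eq_zero h).ge

theorem le_greenProfile (hρ : ρ ≠ 0) (hρ1 : ρ ^ 2 ≤ 1) (hr : 0 ≤ r) (hr4 : r ≤ 4) :
    6 ^ (-(d : ℝ) / 2) / 2 ≤ greenProfile d ρ r := by
  have hconst : ∫ _ in (4 : ℝ)..5, (6 : ℝ) ^ (-(d : ℝ) / 2) / 2 = 6 ^ (-(d : ℝ) / 2) / 2 := by
    norm_num
  calc 6 ^ (-(d : ℝ) / 2) / 2
      = ∫ _ in (4 : ℝ)..5, (6 : ℝ) ^ (-(d : ℝ) / 2) / 2 := hconst.symm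
    _ ≤ ∫ s in (4 : ℝ)..5, greenFlux d ρ s :=
      intervalIntegral.integral_mono_on (by norm_num) intervalIntegrable_const
        (intervalIntegrable_greenFlux hρ (by norm_num) (by norm_num))
        fun s hs => le_greenFlux hρ1 ⟨by linarith [hs.1], hs.2⟩
    _ ≤ greenProfile d ρ r := by
      refine intervalIntegral.integral_mono_interval hr4 (by norm_num) (by norm_num) ?_
        (intervalIntegrable_greenFlux hρ hr (by norm_num))
      filter_upwards [ae_restrict_mem measurableSet_Ioc] with s hs
      exact greenFlux_nonneg (hr.trans hs.1.le)

theorem deriv_greenFlux_le (hs : s ∈ Ioi (-ρ ^ 2)) :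
    deriv (greenFlux d ρ) s ≤
      -d / 4 * (s + ρ ^ 2) ^ (-(d : ℝ) / 2 - 1) * smoothTransition (6 - s) := by
  have hpos : 0 < s + ρ ^ 2 := neg_lt_iff_pos_add.1 hs
  have hrpow : HasDerivAt (fun σ => (σ + ρ ^ 2) ^ (-(d : ℝ) / 2))
      (1 * (-(d : ℝ) / 2) * (s + ρ ^ 2) ^ (-(d : ℝ) / 2 - 1)) s :=
    ((hasDerivAt_id s).add_const (ρ ^ 2)).rpow_const (.inl hpos.ne')
  have hcutoff : DifferentiableAt ℝ (fun σ => smoothTransition (6 - σ)) s :=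
    (smoothTransition.contDiff.comp (contDiff_const.sub contDiff_id)).differentiable one_ne_zero s
  have hanti : Antitone fun σ => smoothTransition (6 - σ) :=
    fun _ _ h => smoothTransition.monotone (by linarith)
  have hderiv := ((hrpow.div_const 2).fun_mul hcutoff.hasDerivAt).deriv
  have hnonpos : (s + ρ ^ 2) ^ (-(d : ℝ) / 2) / 2 *
      deriv (fun σ => smoothTransition (6 - σ)) s ≤ 0 :=
    mul_nonpos_of_nonneg_of_nonpos (by positivity) hanti.deriv_nonpos
  unfold greenFlux
  rw [hderiv]
  linarith

theorem neg_radialLap_greenProfile_le (hρ : ρ ≠ 0) (hr : 0 ≤ r) :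
    -radialLap d (greenProfile d ρ) r ≤ d * (ρ ^ 2 * (r + ρ ^ 2) ^ (-(d : ℝ) / 2 - 1)) := by
  have hρ2 : 0 < ρ ^ 2 := by positivity
  have hpos : 0 < r + ρ ^ 2 := by linarith
  have hmem : r ∈ Ioi (-ρ ^ 2) := neg_lt_iff_pos_add.2 hpos
  have hderiv : deriv (deriv (greenProfile d ρ)) r = -deriv (greenFlux d ρ) r := by
    rw [(deriv_greenProfile_eqOn.eventuallyEq_of_mem (Ioi_mem_nhds hmem)).deriv_eq, deriv.neg]
  have hsplit : (r + ρ ^ 2) ^ (-(d : ℝ) / 2) =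
      (r + ρ ^ 2) ^ (-(d : ℝ) / 2 - 1) * (r + ρ ^ 2) := by
    rw [← rpow_add_one hpos.ne', sub_add_cancel]
  set P := (r + ρ ^ 2) ^ (-(d : ℝ) / 2 - 1)
  calc -radialLap d (greenProfile d ρ) r
      = 2 * d * greenFlux d ρ r + 4 * r * deriv (greenFlux d ρ) r := by
        rw [radialLap, hderiv, (hasDerivAt_greenProfile hmem).deriv]
        ring
    _ ≤ 2 * d * greenFlux d ρ r + 4 * r * (-d / 4 * P * smoothTransition (6 - r)) := by
        gcongr
        exact deriv_greenFlux_le hmem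
    _ = d * (ρ ^ 2 * P) * smoothTransition (6 - r) := by
        rw [greenFlux, hsplit]
        ring
    _ ≤ d * (ρ ^ 2 * P) := mul_le_of_le_one_right (by positivity) (smoothTransition.le_one _)

end GreenFunction

/-- The profile onto which the rescaled Laplacians of the regularised Green functions
concentrate. -/
noncomputable def bubble {d : ℕ} (x : EuclideanSpace ℝ (Fin d)) : ℝ :=
  (1 + ‖x‖ ^ 2) ^ (-(d : ℝ) / 2 - 1)

section Bubble

variable {d : ℕ} {x₀ : EuclideanSpace ℝ (Fin d)}

theorem bubble_pos (x : EuclideanSpace ℝ (Fin d)) : 0 < bubble x := by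
  unfold bubble
  positivity

theorem continuous_bubble : Continuous (bubble (d := d)) :=
  Continuous.rpow_const (by fun_prop) fun x => .inl (by positivity)

theorem bubble_le_one (x : EuclideanSpace ℝ (Fin d)) : bubble x ≤ 1 :=
  rpow_le_one_of_one_le_of_nonpos (by simp) (by linarith [show (0 : ℝ) ≤ d by positivity])

theorem integrable_bubble (d : ℕ) : Integrable (bubble (d := d)) := by
  refine (integrable_rpow_neg_one_add_norm_sq (r := d + 2) (by simp)).congr (.of_forall fun x => ?_)
  simp only [bubble]
  congr 1
  ring

theorem integral_bubble_pos (d : ℕ) : 0 < ∫ x : EuclideanSpace ℝ (Fin d), bubble x :=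
  integral_pos_of_integrable_nonneg_nonzero continuous_bubble (integrable_bubble d)
    (fun x => (bubble_pos x).le) (bubble_pos 0).ne'

theorem norm_pow_mul_bubble_le (x : EuclideanSpace ℝ (Fin d)) :
    ‖x‖ ^ d * bubble x ≤ (1 + ‖x‖ ^ 2)⁻¹ := by
  have hpos : 0 < 1 + ‖x‖ ^ 2 := by positivity
  calc ‖x‖ ^ d * bubble x = (‖x‖ ^ 2) ^ ((d : ℝ) / 2) * bubble x := by
        rw [← rpow_natCast_mul (norm_nonneg x), ← rpow_natCast]
        congr 2
        push_cast
        ring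
    _ ≤ (1 + ‖x‖ ^ 2) ^ ((d : ℝ) / 2) * bubble x := by
        have := (bubble_pos x).le
        gcongr
        linarith
    _ = (1 + ‖x‖ ^ 2)⁻¹ := by
        rw [bubble, ← rpow_add hpos, ← rpow_neg_one]
        congr 1
        ring

theorem tendsto_norm_pow_mul_bubble (d : ℕ) :
    Tendsto (fun x : EuclideanSpace ℝ (Fin d) => ‖x‖ ^ d * bubble x) (Bornology.cobounded _)
      (𝓝 0) :=
  squeeze_zero (fun x => mul_nonneg (by positivity) (bubble_pos x).le) norm_pow_mul_bubble_le
    (tendsto_atTop_add_const_left _ _ ((tendsto_pow_atTop two_ne_zero).comp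
      tendsto_norm_cobounded_atTop)).inv_tendsto_atTop

theorem tendsto_integral_bubble_comp_smul {f : EuclideanSpace ℝ (Fin d) → ℝ} (hf : Integrable f)
    (hfx₀ : ContinuousAt f x₀) :
    Tendsto (fun c : ℝ => ∫ x, c ^ d * bubble (c • (x₀ - x)) * f x) atTop
      (𝓝 ((∫ x : EuclideanSpace ℝ (Fin d), bubble x) * f x₀)) := by
  have hκ := integral_bubble_pos d
  set κ := ∫ x : EuclideanSpace ℝ (Fin d), bubble x
  have hpeak := (tendsto_integral_comp_smul_smul_of_integrable' (μ := volume)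
    (φ := fun x : EuclideanSpace ℝ (Fin d) => bubble x * κ⁻¹)
    (fun x => mul_nonneg (bubble_pos x).le (inv_nonneg.2 hκ.le))
    (by rw [integral_mul_const, mul_inv_cancel₀ hκ.ne'])
    (by simpa only [finrank_euclideanSpace_fin, mul_assoc, zero_mul] using
      (tendsto_norm_pow_mul_bubble d).mul_const κ⁻¹) hf hfx₀).const_mul κ
  refine hpeak.congr fun c => ?_
  rw [← integral_const_mul]
  congr 1 with x
  rw [finrank_euclideanSpace_fin, smul_eq_mul]
  field_simp

end Bubble

/-- The truncated Green function about `x₀` at scale `R`, regularised at length `c⁻¹`; as `c → ∞`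
the positive part of its negative Laplacian concentrates at `x₀`. -/
noncomputable def truncatedGreen {d : ℕ} (x₀ : EuclideanSpace ℝ (Fin d)) (R c : ℝ) :
    EuclideanSpace ℝ (Fin d) → ℝ :=
  radial x₀ R (greenProfile d (c * R)⁻¹)

section TruncatedGreen

variable {d : ℕ} {x₀ : EuclideanSpace ℝ (Fin d)} {R c : ℝ}

theorem contDiff_truncatedGreen (hR : 0 < R) (hc : 0 < c) :
    ContDiff ℝ 2 (truncatedGreen x₀ R c) := by
  refine contDiff_radial fun r hr => contDiffAt_greenProfile (lt_of_lt_of_le ?_ hr)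
  exact neg_lt_zero.2 (by positivity)

theorem truncatedGreen_nonneg (x : EuclideanSpace ℝ (Fin d)) : 0 ≤ truncatedGreen x₀ R c x :=
  greenProfile_nonneg (by positivity)

theorem tsupport_truncatedGreen_subset (hR : 0 < R) :
    tsupport (truncatedGreen x₀ R c) ⊆ closedBall x₀ (3 * R) :=
  tsupport_radial_subset (by norm_num) hR fun r hr => greenProfile_eq_zero (by linarith)

theorem le_truncatedGreen (hR : 0 < R) (hc : R⁻¹ ≤ c) {x : EuclideanSpace ℝ (Fin d)}
    (hx : x ∈ closedBall x₀ (2 * R)) : 6 ^ (-(d : ℝ) / 2) / 2 ≤ truncatedGreen x₀ R c x := by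
  have hcR : 1 ≤ c * R := (inv_le_iff_one_le_mul₀ hR).1 hc
  refine le_greenProfile (by positivity) (pow_le_one₀ (by positivity) (inv_le_one_of_one_le₀ hcR))
    (by positivity) ?_
  rw [mem_closedBall, dist_eq_norm] at hx
  rw [div_le_iff₀ (by positivity)]
  calc ‖x - x₀‖ ^ 2 ≤ (2 * R) ^ 2 := by gcongr
    _ = 4 * R ^ 2 := by ring

theorem le_mul_truncatedGreen {φ : EuclideanSpace ℝ (Fin d) → ℝ} (hR : 0 < R) (hc : R⁻¹ ≤ c)
    (hφ1 : ∀ x, φ x ≤ 1) (hφR : tsupport φ ⊆ closedBall x₀ (2 * R))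
    (x : EuclideanSpace ℝ (Fin d)) :
    φ x ≤ (6 ^ (-(d : ℝ) / 2) / 2)⁻¹ * truncatedGreen x₀ R c x := by
  by_cases hx : x ∈ tsupport φ
  · refine (hφ1 x).trans ((le_inv_mul_iff₀ (by positivity)).2 ?_)
    simpa using le_truncatedGreen hR hc (hφR hx)
  · rw [image_eq_zero_of_notMem_tsupport hx]
    exact mul_nonneg (by positivity) (truncatedGreen_nonneg x)

theorem neg_spaceLap_truncatedGreen_le (hR : 0 < R) (hc : 0 < c)
    (x : EuclideanSpace ℝ (Fin d)) :
    -spaceLap (truncatedGreen x₀ R c) x ≤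
      d * R ^ d / R ^ 2 * (c ^ d * bubble (c • (x₀ - x))) := by
  have hmem : ‖x - x₀‖ ^ 2 / R ^ 2 ∈ Ioi (-(c * R)⁻¹ ^ 2) :=
    (neg_lt_zero.2 (by positivity : 0 < (c * R)⁻¹ ^ 2)).trans_le (by positivity)
  have hbase : ‖x - x₀‖ ^ 2 / R ^ 2 + (c * R)⁻¹ ^ 2 =
      (c * R) ^ (-2 : ℝ) * (1 + ‖c • (x₀ - x)‖ ^ 2) := by
    rw [norm_smul, norm_of_nonneg hc.le, norm_sub_rev x₀ x, rpow_neg (by positivity), rpow_two]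
    field_simp
    ring
  have hscale : ((c * R) ^ (-2 : ℝ)) ^ (-(d : ℝ) / 2 - 1) = (c * R) ^ d * (c * R) ^ 2 := by
    rw [← rpow_mul (by positivity), ← pow_add, ← rpow_natCast]
    congr 1
    push_cast
    ring
  rw [truncatedGreen, spaceLap_radial (contDiffAt_greenProfile hmem), ← neg_div]
  calc -radialLap d (greenProfile d (c * R)⁻¹) (‖x - x₀‖ ^ 2 / R ^ 2) / R ^ 2
      ≤ d * ((c * R)⁻¹ ^ 2 *
          (‖x - x₀‖ ^ 2 / R ^ 2 + (c * R)⁻¹ ^ 2) ^ (-(d : ℝ) / 2 - 1)) / R ^ 2 := by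
        gcongr
        exact neg_radialLap_greenProfile_le (by positivity) (by positivity)
    _ = d * R ^ d / R ^ 2 * (c ^ d * bubble (c • (x₀ - x))) := by
        rw [hbase, mul_rpow (by positivity) (by positivity), hscale, bubble, mul_pow c R d]
        field_simp

theorem integral_max_neg_spaceLap_truncatedGreen_mul_le {w : EuclideanSpace ℝ (Fin d) → ℝ}
    (hR : 0 < R) (hc : 0 < c) (hw : IntegrableOn w (closedBall x₀ (3 * R)))
    (hw0 : ∀ x ∈ closedBall x₀ (3 * R), 0 ≤ w x) :
    ∫ x, max (-spaceLap (truncatedGreen x₀ R c) x) 0 * w x ≤ d * R ^ d / R ^ 2 *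
      ∫ x, c ^ d * bubble (c • (x₀ - x)) * (closedBall x₀ (3 * R)).indicator w x := by
  have hbound (x : EuclideanSpace ℝ (Fin d)) :
      max (-spaceLap (truncatedGreen x₀ R c) x) 0 * w x ≤ d * R ^ d / R ^ 2 *
        (c ^ d * bubble (c • (x₀ - x)) * (closedBall x₀ (3 * R)).indicator w x) := by
    by_cases hx : x ∈ closedBall x₀ (3 * R)
    · have hbub := (bubble_pos (c • (x₀ - x))).le
      rw [indicator_of_mem hx, ← mul_assoc]
      exact mul_le_mul_of_nonneg_right
        (max_le (neg_spaceLap_truncatedGreen_le hR hc x) (by positivity)) (hw0 x hx)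
    · simp [indicator_of_notMem hx, spaceLap_eq_zero_of_notMem_tsupport
        fun h => hx (tsupport_truncatedGreen_subset hR h)]
  rw [← integral_const_mul]
  refine integral_mono_of_nonneg (.of_forall fun x => ?_) (.const_mul ?_ _) (.of_forall hbound)
  · by_cases hx : x ∈ closedBall x₀ (3 * R)
    · exact mul_nonneg (le_max_right _ _) (hw0 x hx)
    · simp [spaceLap_eq_zero_of_notMem_tsupport fun h => hx (tsupport_truncatedGreen_subset hR h)]
  · have hcont : Continuous fun x => c ^ d * bubble (c • (x₀ - x)) :=
      (continuous_bubble.comp (by fun_prop)).const_mul _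
    refine (hw.integrable_indicator measurableSet_closedBall).bdd_mul (c := c ^ d)
      hcont.aestronglyMeasurable (.of_forall fun x => ?_)
    rw [norm_of_nonneg (mul_nonneg (by positivity) (bubble_pos _).le)]
    exact mul_le_of_le_one_right (by positivity) (bubble_le_one _)

end TruncatedGreen

section PointEstimate

variable {d : ℕ} {m n k R t T : ℝ} {Ω : Set (EuclideanSpace ℝ (Fin d))}
  {u : ℝ → EuclideanSpace ℝ (Fin d) → ℝ} {u₀ φ : EuclideanSpace ℝ (Fin d) → ℝ}
  {x₀ : EuclideanSpace ℝ (Fin d)}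

theorem TakesInit.continuousOn (hinit : TakesInit T Ω u u₀) (hT : 0 < T) : ContinuousOn u₀ Ω :=
  (hinit.1.comp (f := fun x => ((0 : ℝ), x)) (by fun_prop) fun _ hx => ⟨⟨le_rfl, hT⟩, hx⟩).congr
    fun x hx => (hinit.2 x hx).symm

theorem setIntegral_le_integral_mul_of_eq_one {s : Set (EuclideanSpace ℝ (Fin d))}
    {w : EuclideanSpace ℝ (Fin d) → ℝ} (hs : MeasurableSet s) (hsΩ : s ⊆ Ω) (hΩ : IsOpen Ω)
    (hφ : Continuous φ) (hφc : HasCompactSupport φ) (hφ0 : ∀ x, 0 ≤ φ x) (hφΩ : tsupport φ ⊆ Ω)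
    (hφ1 : ∀ x ∈ s, φ x = 1) (hw : ContinuousOn w Ω) (hw0 : ∀ x ∈ Ω, 0 ≤ w x) :
    ∫ x in s, w x ≤ ∫ x, φ x * w x := by
  have hind : (fun x => φ x * s.indicator w x) = s.indicator w := by
    ext x
    by_cases hx : x ∈ s
    · rw [hφ1 x hx, one_mul]
    · simp [hx]
  calc ∫ x in s, w x = ∫ x, φ x * s.indicator w x := by rw [hind, integral_indicator hs]
    _ ≤ ∫ x, φ x * w x :=
        integral_mul_le_integral_mul_of_tsupport_subset hΩ hφ hφc hφ0 hφΩ hw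
          (indicator_nonneg fun x hx => hw0 x (hsΩ hx))
          fun x hx => indicator_apply_le' (fun _ => le_rfl) fun _ => hw0 x (hφΩ hx)

theorem IsFDESol.integral_init_le_pointwise (hu : IsFDESol m (Ioo 0 T ×ˢ Ω) u) (hΩ : IsOpen Ω)
    (hinit : TakesInit T Ω u u₀) (hext : ExtinctAt T Ω u) (hm0 : 0 ≤ m) (hm1 : m < 1)
    (hn : n * (1 - m) = 1) (ht : 0 < t) (htT : t < T) (hR : 0 < R)
    (hball : closedBall x₀ (3 * R) ⊆ Ω) (hφ : ContDiff ℝ 2 φ) (hφ0 : ∀ x, 0 ≤ φ x)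
    (hφ1 : ∀ x, φ x ≤ 1) (hφR : tsupport φ ⊆ closedBall x₀ (2 * R)) (hk : 0 ≤ k)
    (hφk : ∀ x, -(k * φ x ^ m) ≤ spaceLap φ x) :
    ∫ x, φ x * u₀ x ≤ exp 1 * ((6 ^ (-(d : ℝ) / 2) / 2)⁻¹ * (T ^ n * t ^ (-(n * m)) *
      (d * R ^ d / R ^ 2 * ((∫ x : EuclideanSpace ℝ (Fin d), bubble x) * u t x₀ ^ m))) +
      k ^ n * t ^ n * volume.real (tsupport φ)) := by
  have hpos (x) (hx : x ∈ Ω) : 0 < u t x := hu.1 (t, x) ⟨⟨ht, htT⟩, hx⟩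
  have hcont : ContinuousOn (fun x => u t x ^ m) Ω :=
    ((hu.continuousOn_slice t).mono fun x hx => ⟨⟨ht, htT⟩, hx⟩).rpow_const
      fun x hx => .inl (hpos x hx).ne'
  have hnhds : closedBall x₀ (3 * R) ∈ 𝓝 x₀ := closedBall_mem_nhds x₀ (by positivity)
  have hx₀ : x₀ ∈ closedBall x₀ (3 * R) := mem_of_mem_nhds hnhds
  have hw : IntegrableOn (fun x => u t x ^ m) (closedBall x₀ (3 * R)) :=
    (hcont.mono hball).integrableOn_compact (isCompact_closedBall _ _)
  have hconc := tendsto_integral_bubble_comp_smul (hw.integrable_indicator measurableSet_closedBall)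
    ((hcont.continuousAt (mem_of_superset hnhds hball)).congr
      (eventuallyEq_of_mem hnhds eqOn_indicator.symm))
  rw [indicator_of_mem hx₀] at hconc
  refine ge_of_tendsto ((((hconc.const_mul _).const_mul _).const_mul _).add_const _ |>.const_mul _)
    ?_
  filter_upwards [eventually_ge_atTop R⁻¹] with c hc
  have hc0 : 0 < c := (inv_pos.2 hR).trans_le hc
  have hGR := tsupport_truncatedGreen_subset (x₀ := x₀) (c := c) hR
  have hφΩ := (hφR.trans (closedBall_subset_closedBall (by linarith))).trans hball
  refine (hu.integral_init_le hΩ hinit hext hm0 hm1 hn ht htT hφ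
    ((isCompact_closedBall _ _).of_isClosed_subset (isClosed_tsupport φ) hφR) hφ0 hφΩ
    (contDiff_truncatedGreen hR hc0) ((isCompact_closedBall _ _).of_isClosed_subset
      (isClosed_tsupport _) hGR) truncatedGreen_nonneg (hGR.trans hball) hk hφk (by positivity)
    (le_mul_truncatedGreen hR hc hφ1 hφR)).trans ?_
  have hT : 0 < T := ht.trans htT
  gcongr
  exact integral_max_neg_spaceLap_truncatedGreen_mul_le hR hc0 hw
    fun x hx => (rpow_pos_of_pos (hpos x (hball hx)) m).le

theorem measureReal_le_of_subset_closedBall_two_mul {s : Set (EuclideanSpace ℝ (Fin d))}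
    (hR : 0 ≤ R) (hs : s ⊆ closedBall x₀ (2 * R)) :
    volume.real s ≤ R ^ d * volume.real (closedBall (0 : EuclideanSpace ℝ (Fin d)) 2) := by
  refine (measureReal_mono hs measure_closedBall_lt_top.ne).trans_eq ?_
  rw [mul_comm 2 R, measureReal_def, Measure.addHaar_closedBall_mul volume x₀ hR zero_le_two,
    finrank_euclideanSpace_fin, ENNReal.toReal_mul, ENNReal.toReal_ofReal (by positivity),
    measureReal_def]

theorem IsFDESol.setIntegral_ball_init_le (hu : IsFDESol m (Ioo 0 T ×ˢ Ω) u) (hΩ : IsOpen Ω)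
    (hinit : TakesInit T Ω u u₀) (hext : ExtinctAt T Ω u) (hu₀ : ∀ x ∈ Ω, 0 ≤ u₀ x)
    (hm0 : 0 ≤ m) (hm1 : m < 1) (hn : n * (1 - m) = 1) (ht : 0 < t) (htT : t < T) (hR : 0 < R)
    (hball : closedBall x₀ (3 * R) ⊆ Ω) (hk : 0 ≤ k) (hφ : ContDiff ℝ 2 φ) (hφ0 : ∀ x, 0 ≤ φ x)
    (hφ1 : ∀ x, φ x ≤ 1) (hφR : tsupport φ ⊆ closedBall x₀ (2 * R))
    (hφ_one : ∀ x ∈ ball x₀ R, φ x = 1)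
    (hφk : ∀ x, -(k / R ^ 2 * φ x ^ m) ≤ spaceLap φ x) :
    ∫ x in ball x₀ R, u₀ x ≤ R ^ d *
      (exp 1 * (k ^ n * volume.real (closedBall (0 : EuclideanSpace ℝ (Fin d)) 2)) *
          R ^ (-2 * n) * t ^ n +
        exp 1 * ((6 ^ (-(d : ℝ) / 2) / 2)⁻¹ * (d * ∫ x : EuclideanSpace ℝ (Fin d), bubble x)) *
          T ^ n * R ^ (-2 : ℝ) * t ^ (-(n * m)) * u t x₀ ^ m) := by
  have hφΩ := (hφR.trans (closedBall_subset_closedBall (by linarith))).trans hball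
  have hballΩ := (ball_subset_closedBall.trans
    (closedBall_subset_closedBall (by linarith : R ≤ 3 * R))).trans hball
  have hscale : (k / R ^ 2) ^ n = k ^ n * R ^ (-2 * n) := by
    rw [rpow_mul hR.le, ← mul_rpow hk (by positivity), rpow_neg hR.le, rpow_two, div_eq_mul_inv]
  calc ∫ x in ball x₀ R, u₀ x ≤ ∫ x, φ x * u₀ x :=
        setIntegral_le_integral_mul_of_eq_one measurableSet_ball hballΩ hΩ hφ.continuous
          ((isCompact_closedBall _ _).of_isClosed_subset (isClosed_tsupport φ) hφR) hφ0 hφΩ hφ_one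
          (hinit.continuousOn (ht.trans htT)) hu₀
    _ ≤ _ := hu.integral_init_le_pointwise hΩ hinit hext hm0 hm1 hn ht htT hR hball hφ hφ0 hφ1 hφR
        (by positivity) hφk
    _ ≤ exp 1 * ((6 ^ (-(d : ℝ) / 2) / 2)⁻¹ * (T ^ n * t ^ (-(n * m)) *
          (d * R ^ d / R ^ 2 * ((∫ x : EuclideanSpace ℝ (Fin d), bubble x) * u t x₀ ^ m))) +
          (k / R ^ 2) ^ n * t ^ n *
            (R ^ d * volume.real (closedBall (0 : EuclideanSpace ℝ (Fin d)) 2))) := by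
        gcongr
        exact measureReal_le_of_subset_closedBall_two_mul hR.le hφR
    _ = _ := by
        rw [hscale, rpow_neg hR.le, rpow_two]
        ring

end PointEstimate

/-- **Aronson–Caffarelli type estimate** (Theorem 1.1, first part). -/
theorem aronson_caffarelli_fde
    (d : ℕ) (hd : 1 ≤ d) (m : ℝ) (hm0 : 0 < m) (hm1 : m < 1) :
    ∃ C₁ C₂ : ℝ, 0 < C₁ ∧ 0 < C₂ ∧
      ∀ (Ω : Set (EuclideanSpace ℝ (Fin d))), IsOpen Ω →
      ∀ (u : ℝ → EuclideanSpace ℝ (Fin d) → ℝ) (u₀ : EuclideanSpace ℝ (Fin d) → ℝ) (T : ℝ),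
        0 < T →
        IsFDESol m (Ioo 0 T ×ˢ Ω) u →
        (∀ x ∈ Ω, 0 ≤ u₀ x) →
        LocallyIntegrableOn u₀ Ω →
        TakesInit T Ω u u₀ →
        ExtinctAt T Ω u →
      ∀ (x₀ : EuclideanSpace ℝ (Fin d)) (R : ℝ), 0 < R →
        closedBall x₀ (3 * R) ⊆ Ω →
      ∀ t : ℝ, 0 < t → t < T →
        R ^ (-(d : ℝ)) * ∫ x in ball x₀ R, u₀ x ≤
          C₁ * R ^ (-2 / (1 - m)) * t ^ ((1 : ℝ) / (1 - m)) +
          C₂ * T ^ ((1 : ℝ) / (1 - m)) * R ^ (-2 : ℝ) * t ^ (-(m / (1 - m))) *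
            u t x₀ ^ m := by
  obtain ⟨k, hk, hcutoff⟩ := exists_cutoff_neg_le_spaceLap d hm1
  have hκ := integral_bubble_pos d
  have hV : 0 < volume.real (closedBall (0 : EuclideanSpace ℝ (Fin d)) 2) :=
    ENNReal.toReal_pos (measure_closedBall_pos volume _ two_pos).ne' measure_closedBall_lt_top.ne
  refine ⟨exp 1 * (k ^ (1 / (1 - m)) * volume.real (closedBall (0 : EuclideanSpace ℝ (Fin d)) 2)),
    exp 1 * ((6 ^ (-(d : ℝ) / 2) / 2)⁻¹ * (d * ∫ x : EuclideanSpace ℝ (Fin d), bubble x)),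
    by positivity, by positivity, ?_⟩
  intro Ω hΩ u u₀ T _ hu hu₀ _ hinit hext x₀ R hR hball t ht htT
  obtain ⟨φ, hφ, hφ0, hφ1, hφ_one, hφR, hφk⟩ := hcutoff x₀ R hR
  rw [rpow_neg hR.le, rpow_natCast, inv_mul_le_iff₀ (by positivity), div_eq_mul_one_div m,
    mul_comm m, div_eq_mul_one_div (-2)]
  exact hu.setIntegral_ball_init_le hΩ hinit hext hu₀ hm0.le hm1
    (one_div_mul_cancel (sub_pos.2 hm1).ne') ht htT hR hball hk.le hφ hφ0 hφ1 hφR hφ_one hφk
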